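/- Let n ≥ 2, 1 ≤ k ≤ n-1, σ ≥ 0, and let ω_k be the largest zero of T_n^{(k+1)}. Then for every x ∈ [0, ω_k], m_k(x,σ) ≤ (3/(2k+1))·T_{n-1}^{(k)}(1) + (2/(2k+1))·(2(k+1)/(n+k))·T_n^{(k)}(1)·(σ/σ_n). -/

import Mathlib

open Polynomial Set

/-- `k`-th derivative of the Chebyshev polynomial `T_m`, evaluated at `x`. -/
noncomputable def chebDeriv (m : ℤ) (k : ℕ) (x : ℝ) : ℝ :=
  (derivative^[k] (Polynomial.Chebyshev.T ℝ m)).eval x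

/-- `σ_n = 2^(n-1) n! = T_n^{(n)}(1)`. -/
noncomputable def sigmaN (n : ℕ) : ℝ := 2 ^ (n - 1) * (n.factorial : ℝ)

/-- `f` is `n` times differentiable on the set `s`. -/
def NTimesDiffOn (n : ℕ) (f : ℝ → ℝ) (s : Set ℝ) : Prop :=
  ∀ i < n, DifferentiableOn ℝ (iteratedDerivWithin i f s) s

/-- The class `W^n_∞(σ)` on `[-1,1]`. -/
def memW (n : ℕ) (σ : ℝ) (f : ℝ → ℝ) : Prop :=
  NTimesDiffOn n f (Icc (-1:ℝ) 1) ∧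
  (∀ x ∈ Icc (-1:ℝ) 1, |f x| ≤ 1) ∧
  (∀ x ∈ Icc (-1:ℝ) 1, |iteratedDerivWithin n f (Icc (-1:ℝ) 1) x| ≤ σ)

/-- `m_k(x,σ) = sup { |f^{(k)}(x)| : f ∈ W^n_∞(σ) }`. -/
noncomputable def mval (n k : ℕ) (x σ : ℝ) : ℝ :=
  sSup {y | ∃ f : ℝ → ℝ, memW n σ f ∧
    y = |iteratedDerivWithin k f (Icc (-1:ℝ) 1) x|}

/-- `m_k^*(x,σ) = sup { |f^{(k)}(x)| : f ∈ W^n_∞(σ), f^{(k+1)}(x) = 0 }`. -/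
noncomputable def mstar (n k : ℕ) (x σ : ℝ) : ℝ :=
  sSup {y | ∃ f : ℝ → ℝ, memW n σ f ∧
    iteratedDerivWithin (k+1) f (Icc (-1:ℝ) 1) x = 0 ∧
    y = |iteratedDerivWithin k f (Icc (-1:ℝ) 1) x|}

/-- `μ_k(x₀)`: best constant in the pointwise Markov inequality. -/
noncomputable def muk (n k : ℕ) (x : ℝ) : ℝ :=
  sSup {y | ∃ p : Polynomial ℝ, p.natDegree ≤ n ∧
    (∀ t ∈ Icc (-1:ℝ) 1, |p.eval t| ≤ 1) ∧
    y = |(derivative^[k] p).eval x|}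

/-- `μ_k^*(x₀)`: best constant in the pointwise Schur-type inequality. -/
noncomputable def mukStar (n k : ℕ) (x : ℝ) : ℝ :=
  sSup {y | ∃ p : Polynomial ℝ, p.natDegree ≤ n ∧
    (∀ t ∈ Icc (-1:ℝ) 1, |p.eval t| ≤ 1) ∧
    (derivative^[k+1] p).eval x = 0 ∧
    y = |(derivative^[k] p).eval x|}

open Filter Topology

/-! Let `Ω` have `n - 1` simple zeros, all in `[-1, 1]`, and interpolate `f` at them. By Laguerre's
inequality the Lagrange expansion of the Wronskian `f^{(k)} Ω^{(k+1)} - f^{(k+1)} Ω^{(k)}` at `x`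
has the coefficients `f(r) / Ω'(r)` times nonnegative numbers, so for `|f| ≤ 1` it is dominated by
that of a Chebyshev polynomial equal to `sgn Ω'(r)` at every node `r`, up to a common sign. By
Rolle's theorem the interpolation error contributes `f^{(n)}(ξ) / n!` times the Wronskian of `Ω`
and `(X - x) Ω`.

The Wronskian reduces to its first term at `ω_k` for `Ω = T_n'`, and at every zero of `f^{(k+1)}`
for `Ω = (X ∓ 1) T_{n-1}'`. On `[-ω_k, ω_k]` the maximum of `|f^{(k)}|` is attained at a point of
one of these two kinds. In the second case, averaging over the two signs leaves two quadratic forms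
in `T_{n-1}^{(k)}(x)` and `T_{n-1}^{(k+1)}(x)`; they are estimated through an energy that is
largest at `ω_k` on `[0, ω_k]`, and through bounds on `ω_k` that follow from the real-rootedness of
`T_n`. This needs `2 ≤ k`; for `k = 1` an affine change of variable moves `x` to `ω_1`. -/

/-! ### Derivative chains and Rolle's theorem -/

/-- `F 0, F 1, …, F n` behave like a function on `[a, b]` and its first `n` derivatives: each one
but the last is continuous on `[a, b]`, with the next one as its derivative on `(a, b)`. -/
def IsDerivChain (n : ℕ) (F : ℕ → ℝ → ℝ) (a b : ℝ) : Prop :=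
  ∀ i < n, ContinuousOn (F i) (Icc a b) ∧ ∀ x ∈ Ioo a b, HasDerivAt (F i) (F (i + 1) x) x

namespace IsDerivChain

variable {n : ℕ} {F G : ℕ → ℝ → ℝ} {a b : ℝ}

lemma add (hF : IsDerivChain n F a b) (hG : IsDerivChain n G a b) :
    IsDerivChain n (fun i t => F i t + G i t) a b := fun i hi =>
  ⟨(hF i hi).1.add (hG i hi).1, fun x hx => ((hF i hi).2 x hx).add ((hG i hi).2 x hx)⟩

lemma const_mul (c : ℝ) (hF : IsDerivChain n F a b) :
    IsDerivChain n (fun i t => c * F i t) a b := fun i hi =>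
  ⟨continuousOn_const.mul (hF i hi).1, fun x hx => ((hF i hi).2 x hx).const_mul c⟩

lemma shift (hF : IsDerivChain n F a b) {j m : ℕ} (h : j + m ≤ n) :
    IsDerivChain m (fun i => F (j + i)) a b := fun i hi => hF (j + i) (by omega)

end IsDerivChain

section Rolle

variable {a b : ℝ}

lemma exists_finset_isLocalExtr {G : ℝ → ℝ} (hG : ContinuousOn G (Icc a b)) (s : Finset ℝ)
    (hs : ∀ t ∈ s, t ∈ Icc a b ∧ G t = 0) :
    ∃ u : Finset ℝ, s.card ≤ u.card + 1 ∧ ∀ t ∈ u, t ∉ s ∧ t ∈ Ioo a b ∧ IsLocalExtr G t := by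
  suffices ∃ u : Finset ℝ, s.card ≤ u.card + 1 ∧
      ∀ t ∈ u, (∃ z ∈ s, t < z) ∧ t ∉ s ∧ t ∈ Ioo a b ∧ IsLocalExtr G t by
    obtain ⟨u, hcard, hu⟩ := this
    exact ⟨u, hcard, fun t ht => (hu t ht).2⟩
  induction s using Finset.induction_on_max with
  | empty => exact ⟨∅, by simp⟩
  | insert z s hz ih =>
    rcases s.eq_empty_or_nonempty with rfl | hne
    · exact ⟨∅, by simp⟩
    obtain ⟨u, hcard, hu⟩ := ih fun t ht => hs t (Finset.mem_insert_of_mem ht)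
    set y := s.max' hne
    have hy : y ∈ s := s.max'_mem hne
    have hsy : ∀ t ∈ s, t ≤ y := s.le_max'
    obtain ⟨⟨hay, _⟩, hGy⟩ := hs y (Finset.mem_insert_of_mem hy)
    obtain ⟨⟨_, hzb⟩, hGz⟩ := hs z (Finset.mem_insert_self _ _)
    obtain ⟨c, ⟨hyc, hcz⟩, hc⟩ := exists_isLocalExtr_Ioo (hz y hy)
      (hG.mono (Icc_subset_Icc hay hzb)) (hGy.trans hGz.symm)
    have huy : ∀ t ∈ u, t < y := fun t ht => by
      obtain ⟨⟨v, hv, htv⟩, -⟩ := hu t ht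
      exact htv.trans_le (hsy v hv)
    refine ⟨insert c u, ?_, fun t ht => ?_⟩
    · rw [Finset.card_insert_of_notMem fun h => (huy c h).not_gt hyc,
        Finset.card_insert_of_notMem fun h => (hz z h).false]
      omega
    rcases Finset.mem_insert.1 ht with rfl | ht
    · exact ⟨⟨z, Finset.mem_insert_self _ _, hcz⟩, by grind,
        ⟨hay.trans_lt hyc, hcz.trans_le hzb⟩, hc⟩
    · exact ⟨⟨y, Finset.mem_insert_of_mem hy, huy t ht⟩, by grind, (hu t ht).2.2⟩

lemma IsDerivChain.exists_finset_zeros {F : ℕ → ℝ → ℝ} {n : ℕ} (hF : IsDerivChain n F a b)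
    (hn : 0 < n) (s : Finset ℝ) (hs : ∀ t ∈ s, t ∈ Icc a b ∧ F 0 t = 0) :
    ∃ u : Finset ℝ, s.card ≤ u.card + 1 ∧
      ∀ t ∈ u, t ∉ s ∧ t ∈ Ioo a b ∧ IsLocalExtr (F 0) t ∧ F 1 t = 0 := by
  obtain ⟨u, hcard, hu⟩ := exists_finset_isLocalExtr (hF 0 hn).1 s hs
  refine ⟨u, hcard, fun t ht => ?_⟩
  obtain ⟨hts, htI, hext⟩ := hu t ht
  exact ⟨hts, htI, hext, hext.hasDerivAt_eq_zero ((hF 0 hn).2 t htI)⟩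

lemma IsDerivChain.exists_finset_zeros_iterate (m : ℕ) :
    ∀ {F : ℕ → ℝ → ℝ}, IsDerivChain m F a b → ∀ s : Finset ℝ,
      (∀ t ∈ s, t ∈ Icc a b ∧ F 0 t = 0) →
      ∃ u : Finset ℝ, s.card ≤ u.card + m ∧ ∀ t ∈ u, t ∈ Icc a b ∧ F m t = 0 := by
  induction m with
  | zero => exact fun _ s hs => ⟨s, by simp, hs⟩
  | succ m ih =>
    intro F hF s hs
    obtain ⟨u, hus, hu⟩ := hF.exists_finset_zeros (Nat.succ_pos m) s hs
    obtain ⟨v, hvu, hv⟩ := ih (hF.shift (j := 1) (by omega)) u fun t ht =>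
      ⟨Ioo_subset_Icc_self (hu t ht).2.1, (hu t ht).2.2.2⟩
    exact ⟨v, by omega, by simpa [add_comm] using hv⟩

lemma IsDerivChain.exists_finset_zeros_of_double_zero {F : ℕ → ℝ → ℝ} {n : ℕ}
    (hF : IsDerivChain n F a b) (hn : 0 < n) (s : Finset ℝ)
    (hs : ∀ t ∈ s, t ∈ Icc a b ∧ F 0 t = 0) {x : ℝ} (hxI : x ∈ Ioo a b) (hx : x ∈ s)
    (hx1 : F 1 x = 0) :
    ∃ u : Finset ℝ, s.card ≤ u.card ∧ x ∈ u ∧ ∀ t ∈ u, t ∈ Icc a b ∧ F 1 t = 0 := by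
  obtain ⟨u, hcard, hu⟩ := hF.exists_finset_zeros hn s hs
  have hxu : x ∉ u := fun h => (hu x h).1 hx
  refine ⟨insert x u, by rwa [Finset.card_insert_of_notMem hxu], Finset.mem_insert_self _ _,
    fun t ht => ?_⟩
  rcases Finset.mem_insert.1 ht with rfl | ht
  · exact ⟨Ioo_subset_Icc_self hxI, hx1⟩
  · exact ⟨Ioo_subset_Icc_self (hu t ht).2.1, (hu t ht).2.2.2⟩

lemma eventually_exists_sub_eq_mul {g g' : ℝ → ℝ} {x : ℝ} {P : ℝ → Prop}
    (hg : ∀ᶠ t in 𝓝 x, HasDerivAt g (g' t) t) (hP : ∀ᶠ c in 𝓝[≠] x, P c) :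
    ∀ᶠ t in 𝓝[≠] x, ∃ c, P c ∧ 0 < (c - x) * (t - x) ∧ g t - g x = g' c * (t - x) := by
  obtain ⟨l, r, hx, hlr⟩ := mem_nhds_iff_exists_Ioo_subset.1
    (hg.and (eventually_nhdsWithin_iff.1 hP))
  filter_upwards [nhdsWithin_le_nhds (Ioo_mem_nhds hx.1 hx.2), self_mem_nhdsWithin] with t ht htx
  have hderiv : ∀ u ∈ Icc (min x t) (max x t), HasDerivAt g (g' u) u := fun u hu =>
    (hlr ⟨(lt_min hx.1 ht.1).trans_le hu.1, hu.2.trans_lt (max_lt hx.2 ht.2)⟩).1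
  obtain ⟨c, hc, hslope⟩ := exists_hasDerivAt_eq_slope g g' (min_lt_max.2 (Ne.symm htx))
    (fun u hu => (hderiv u hu).continuousAt.continuousWithinAt)
    fun u hu => hderiv u (Ioo_subset_Icc_self hu)
  have hcI : c ∈ Ioo l r := ⟨(lt_min hx.1 ht.1).trans hc.1, hc.2.trans (max_lt hx.2 ht.2)⟩
  rcases lt_or_gt_of_ne (htx : t ≠ x) with h | h
  · rw [min_eq_right h.le, max_eq_left h.le] at hc hslope
    refine ⟨c, (hlr hcI).2 hc.2.ne, mul_pos_of_neg_of_neg (by linarith [hc.2]) (by linarith), ?_⟩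
    rw [hslope, div_mul_eq_mul_div, eq_div_iff (by linarith)]
    ring
  · rw [min_eq_left h.le, max_eq_right h.le] at hc hslope
    refine ⟨c, (hlr hcI).2 hc.1.ne', mul_pos (by linarith [hc.1]) (by linarith), ?_⟩
    rw [hslope, div_mul_cancel₀ _ (by linarith)]

-- A positive third derivative would make `f` strictly increasing through `x`.
lemma third_deriv_nonpos_of_isLocalExtr {f f₁ f₂ : ℝ → ℝ} {x c : ℝ}
    (hf : ∀ᶠ t in 𝓝 x, HasDerivAt f (f₁ t) t) (hf₁ : ∀ᶠ t in 𝓝 x, HasDerivAt f₁ (f₂ t) t)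
    (hf₂ : HasDerivAt f₂ c x) (h₁ : f₁ x = 0) (h₂ : f₂ x = 0) (hext : IsLocalExtr f x) :
    c ≤ 0 := by
  by_contra! hc
  have hf₂_sign : ∀ᶠ t in 𝓝[≠] x, 0 < f₂ t * (t - x) := by
    filter_upwards [(hasDerivAt_iff_tendsto_slope.1 hf₂).eventually_const_lt hc,
      self_mem_nhdsWithin] with t ht htx
    have h0 : 0 < (t - x) ^ 2 := pow_two_pos_of_ne_zero (sub_ne_zero.2 htx)
    rw [slope_def_field, h₂, sub_zero] at ht
    have := mul_pos ht h0
    field_simp at this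
    linarith
  have hf₁_pos : ∀ᶠ t in 𝓝[≠] x, 0 < f₁ t := by
    filter_upwards [eventually_exists_sub_eq_mul hf₁ hf₂_sign] with t h_mvt
    obtain ⟨c, hc, hct, h⟩ := h_mvt
    have hcx := mul_pos hc hct
    rw [h₁, sub_zero] at h
    nlinarith [sq_nonneg (c - x)]
  have hf_sign : ∀ᶠ t in 𝓝[≠] x, 0 < (f t - f x) * (t - x) := by
    filter_upwards [eventually_exists_sub_eq_mul hf hf₁_pos, self_mem_nhdsWithin] with t h_mvt htx
    obtain ⟨c, hc, -, h⟩ := h_mvt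
    rw [h, mul_assoc]
    exact mul_pos hc (mul_self_pos.2 (sub_ne_zero.2 htx))
  rcases hext with hmin | hmax
  · obtain ⟨t, hft, ht, htx⟩ := ((hf_sign.filter_mono (nhdsLT_le_nhdsNE x)).and
      ((hmin.filter_mono nhdsWithin_le_nhds).and (self_mem_nhdsWithin (s := Iio x)))).exists
    exact hft.not_ge (mul_nonpos_of_nonneg_of_nonpos (sub_nonneg.2 ht) (sub_nonpos.2 htx.le))
  · obtain ⟨t, hft, ht, htx⟩ := ((hf_sign.filter_mono (nhdsGT_le_nhdsNE x)).and
      ((hmax.filter_mono nhdsWithin_le_nhds).and (self_mem_nhdsWithin (s := Ioi x)))).exists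
    exact hft.not_ge (mul_nonpos_of_nonpos_of_nonneg (sub_nonpos.2 ht) (sub_nonneg.2 htx.le))

lemma third_deriv_eq_zero_of_isLocalExtr {f f₁ f₂ : ℝ → ℝ} {x c : ℝ}
    (hf : ∀ᶠ t in 𝓝 x, HasDerivAt f (f₁ t) t) (hf₁ : ∀ᶠ t in 𝓝 x, HasDerivAt f₁ (f₂ t) t)
    (hf₂ : HasDerivAt f₂ c x) (h₁ : f₁ x = 0) (h₂ : f₂ x = 0) (hext : IsLocalExtr f x) :
    c = 0 := by
  refine le_antisymm (third_deriv_nonpos_of_isLocalExtr hf hf₁ hf₂ h₁ h₂ hext) ?_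
  have := third_deriv_nonpos_of_isLocalExtr (f := -f) (f₁ := -f₁) (f₂ := -f₂)
    (hf.mono fun _ h => h.neg) (hf₁.mono fun _ h => h.neg) hf₂.neg (by simp [h₁]) (by simp [h₂])
    (hext.symm.imp IsMaxFilter.neg IsMinFilter.neg)
  linarith

-- A zero of `F 1` found by Rolle's theorem is a local extremum of `F 0`, hence a triple zero as
-- soon as it is a double one: this is the extra zero in the count when `x` is such a point.
lemma IsDerivChain.exists_zero_of_double_zero_deriv {m : ℕ} (hm : 2 ≤ m) {F : ℕ → ℝ → ℝ}
    (hF : IsDerivChain (m + 1) F a b) (s : Finset ℝ) (hcard : m ≤ s.card)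
    (hs : ∀ t ∈ s, t ∈ Icc a b ∧ F 0 t = 0) {x : ℝ} (hx : x ∈ Ioo a b) (h₁ : F 1 x = 0)
    (h₂ : F 2 x = 0) : ∃ ξ ∈ Icc a b, F (m + 1) ξ = 0 := by
  have hderiv {i : ℕ} (hi : i < m + 1) : ∀ᶠ t in 𝓝 x, HasDerivAt (F i) (F (i + 1) t) t := by
    filter_upwards [Ioo_mem_nhds hx.1 hx.2] with t ht using (hF i hi).2 t ht
  have hF₁ : IsDerivChain m (fun i => F (1 + i)) a b := hF.shift (by omega)
  have hF₂ : IsDerivChain (m - 1) (fun i => F (2 + i)) a b := hF.shift (by omega)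
  have finish {p : ℕ} (hp : p ≤ m + 1) (v : Finset ℝ) (hv : m + 2 - p ≤ v.card)
      (hv0 : ∀ t ∈ v, t ∈ Icc a b ∧ F p t = 0) : ∃ ξ ∈ Icc a b, F (m + 1) ξ = 0 := by
    obtain ⟨w, hw, hw0⟩ :=
      (hF.shift (j := p) (m := m + 1 - p) (by omega)).exists_finset_zeros_iterate _ v hv0
    obtain ⟨ξ, hξ⟩ := Finset.card_pos.1 (by omega : 0 < w.card)
    exact ⟨ξ, (hw0 ξ hξ).1, by simpa [Nat.add_sub_cancel' hp] using (hw0 ξ hξ).2⟩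
  obtain ⟨u, hus, hu⟩ := hF.exists_finset_zeros (by omega) s hs
  have hu0 : ∀ t ∈ u, t ∈ Icc a b ∧ F 1 t = 0 := fun t ht =>
    ⟨Ioo_subset_Icc_self (hu t ht).2.1, (hu t ht).2.2.2⟩
  by_cases hxu : x ∈ u
  · have h₃ : F 3 x = 0 := third_deriv_eq_zero_of_isLocalExtr (hderiv (by omega))
      (hderiv (by omega)) ((hF 2 (by omega)).2 x hx) h₁ h₂ (hu x hxu).2.2.1
    obtain ⟨v, huv, hxv, hv0⟩ :=
      hF₁.exists_finset_zeros_of_double_zero (by omega) u hu0 hx hxu h₂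
    obtain ⟨w, hvw, -, hw0⟩ :=
      hF₂.exists_finset_zeros_of_double_zero (by omega) v hv0 hx hxv h₃
    exact finish (by omega) w (by omega) hw0
  · obtain ⟨v, huv, -, hv0⟩ := hF₁.exists_finset_zeros_of_double_zero (by omega) (insert x u)
      (by simpa [hu0, h₁] using ⟨⟨hx.1.le, hx.2.le⟩, hu0⟩) hx (Finset.mem_insert_self _ _) h₂
    rw [Finset.card_insert_of_notMem hxu] at huv
    exact finish (by omega) v (by omega) hv0

lemma IsDerivChain.exists_zero_of_double_zero {n k : ℕ} (hk : 1 ≤ k) (hkn : k + 2 ≤ n)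
    {F : ℕ → ℝ → ℝ} (hF : IsDerivChain n F a b) (s : Finset ℝ) (hcard : n ≤ s.card + 1)
    (hs : ∀ t ∈ s, t ∈ Icc a b ∧ F 0 t = 0) {x : ℝ} (hx : x ∈ Ioo a b) (h₁ : F k x = 0)
    (h₂ : F (k + 1) x = 0) : ∃ ξ ∈ Icc a b, F n ξ = 0 := by
  obtain ⟨i, rfl⟩ := Nat.exists_eq_add_of_le' hk
  obtain ⟨m, rfl⟩ := Nat.exists_eq_add_of_le (show i + 1 ≤ n by omega)
  obtain ⟨u, hus, hu⟩ := IsDerivChain.exists_finset_zeros_iterate i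
    (hF.shift (j := 0) (m := i) (by omega)) s (by simpa using hs)
  have := (hF.shift (j := i) (m := m + 1) (by omega)).exists_zero_of_double_zero_deriv (by omega) u
    (by omega) (by simpa using hu) hx h₁ h₂
  simpa [add_assoc, add_comm 1 m] using this

end Rolle

/-! ### Real-rooted polynomials -/

/-- The `j`-th derivative of a polynomial as a function, with arguments ordered so that
`iterDeriv p` is a derivative chain. -/
noncomputable def iterDeriv (p : ℝ[X]) (j : ℕ) (x : ℝ) : ℝ := (derivative^[j] p).eval x

lemma iterDeriv_zero (p : ℝ[X]) (x : ℝ) : iterDeriv p 0 x = p.eval x := rfl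

lemma iterDeriv_add (p q : ℝ[X]) (j : ℕ) (x : ℝ) :
    iterDeriv (p + q) j x = iterDeriv p j x + iterDeriv q j x := by
  simp [iterDeriv]

lemma iterDeriv_sub (p q : ℝ[X]) (j : ℕ) (x : ℝ) :
    iterDeriv (p - q) j x = iterDeriv p j x - iterDeriv q j x := by
  simp [iterDeriv]

lemma iterDeriv_C_mul (c : ℝ) (p : ℝ[X]) (j : ℕ) (x : ℝ) :
    iterDeriv (C c * p) j x = c * iterDeriv p j x := by
  simp [iterDeriv, iterate_derivative_C_mul]

lemma iterDeriv_sum {ι : Type*} (s : Finset ι) (p : ι → ℝ[X]) (j : ℕ) (x : ℝ) :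
    iterDeriv (∑ i ∈ s, p i) j x = ∑ i ∈ s, iterDeriv (p i) j x := by
  simp [iterDeriv, iterate_derivative_sum, eval_finsetSum]

lemma iterDeriv_iterate_derivative (p : ℝ[X]) (i j : ℕ) (x : ℝ) :
    iterDeriv (derivative^[i] p) j x = iterDeriv p (j + i) x := by
  simp [iterDeriv, Function.iterate_add_apply]

lemma iterDeriv_derivative (p : ℝ[X]) (j : ℕ) (x : ℝ) :
    iterDeriv (derivative p) j x = iterDeriv p (j + 1) x :=
  iterDeriv_iterate_derivative p 1 j x

lemma hasDerivAt_iterDeriv (p : ℝ[X]) (j : ℕ) (x : ℝ) :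
    HasDerivAt (iterDeriv p j) (iterDeriv p (j + 1) x) x := by
  unfold iterDeriv
  simp only [Function.iterate_succ_apply']
  exact Polynomial.hasDerivAt _ _

lemma isDerivChain_iterDeriv (p : ℝ[X]) (n : ℕ) (a b : ℝ) : IsDerivChain n (iterDeriv p) a b :=
  fun i _ => ⟨(Polynomial.continuous _).continuousOn, fun x _ => hasDerivAt_iterDeriv p i x⟩

lemma iterDeriv_eq_zero {p : ℝ[X]} {j : ℕ} (h : p.natDegree < j) (x : ℝ) :
    iterDeriv p j x = 0 := by
  simp [iterDeriv, iterate_derivative_eq_zero h]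

lemma iterDeriv_natDegree (p : ℝ[X]) (x : ℝ) :
    iterDeriv p p.natDegree x = p.natDegree.factorial * p.leadingCoeff := by
  have h : (derivative^[p.natDegree] p).natDegree = 0 := by
    simpa using natDegree_iterate_derivative p p.natDegree
  rw [iterDeriv, eq_C_of_natDegree_eq_zero h, eval_C, coeff_iterate_derivative]
  simp only [zero_add, Nat.descFactorial_self, nsmul_eq_mul, leadingCoeff]

lemma iterDeriv_X_sub_C_mul (r : ℝ) (p : ℝ[X]) (j : ℕ) (x : ℝ) :
    iterDeriv ((X - C r) * p) j x = (x - r) * iterDeriv p j x + j * iterDeriv p (j - 1) x := by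
  suffices derivative^[j] ((X - C r) * p)
      = (X - C r) * derivative^[j] p + C (j : ℝ) * derivative^[j - 1] p by
    simp [iterDeriv, this]
  induction j with
  | zero => simp
  | succ j ih =>
    rw [Function.iterate_succ_apply', ih]
    rcases j with _ | j <;> simp [Function.iterate_succ_apply'] <;> ring

section RealRooted

lemma splits_derivative {p : ℝ[X]} (hp : p.Splits) : (derivative p).Splits := by
  rw [splits_iff_card_roots] at hp ⊢
  have h₁ := card_roots_le_derivative p
  have h₂ := natDegree_derivative_le p
  exact le_antisymm (card_roots' _) (by omega)

lemma splits_iterate_derivative {p : ℝ[X]} (hp : p.Splits) (j : ℕ) :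
    (derivative^[j] p).Splits := by
  induction j with
  | zero => exact hp
  | succ j ih => exact Function.iterate_succ_apply' derivative j p ▸ splits_derivative ih

lemma splits_induction {P : ℝ[X] → Prop} {p : ℝ[X]} (hp : p.Splits) (C_lead : P (C p.leadingCoeff))
    (X_sub_C_mul : ∀ r ∈ p.roots, ∀ q, P q → P ((X - C r) * q)) : P p := by
  rw [hp.eq_prod_roots]
  generalize p.roots = s at X_sub_C_mul
  induction s using Multiset.induction with
  | empty => simpa using C_lead
  | cons r s ih =>
    rw [Multiset.map_cons, Multiset.prod_cons, mul_left_comm]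
    exact X_sub_C_mul r (Multiset.mem_cons_self r s) _
      (ih fun r' hr' => X_sub_C_mul r' (Multiset.mem_cons_of_mem hr'))

lemma laguerre_inequality {p : ℝ[X]} (hp : p.Splits) (x : ℝ) :
    iterDeriv p 0 x * iterDeriv p 2 x ≤ iterDeriv p 1 x ^ 2 := by
  refine splits_induction
    (P := fun p => iterDeriv p 0 x * iterDeriv p 2 x ≤ iterDeriv p 1 x ^ 2) hp ?_ fun r _ q ih => ?_
  · simp [iterDeriv]
  · simp only [iterDeriv_X_sub_C_mul, Nat.add_one_sub_one, Nat.cast_zero, Nat.cast_one,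
      Nat.cast_ofNat, tsub_self, zero_mul, add_zero, one_mul]
    nlinarith [mul_nonneg (sq_nonneg (x - r)) (sub_nonneg.2 ih), sq_nonneg (iterDeriv q 0 x)]

lemma laguerre_inequality_iterDeriv {p : ℝ[X]} (hp : p.Splits) (j : ℕ) (x : ℝ) :
    iterDeriv p j x * iterDeriv p (j + 2) x ≤ iterDeriv p (j + 1) x ^ 2 := by
  simpa only [iterDeriv_iterate_derivative, zero_add, add_zero, add_comm _ j]
    using laguerre_inequality (splits_iterate_derivative hp j) x

-- Laguerre's inequality for `p / (X - w)`.
lemma laguerre_inequality_of_isRoot {p : ℝ[X]} (hp : p.Splits) {w : ℝ} (hw : p.IsRoot w) :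
    4 * iterDeriv p 1 w * iterDeriv p 3 w ≤ 3 * iterDeriv p 2 w ^ 2 := by
  rcases eq_or_ne p 0 with rfl | hp0
  · simp [iterDeriv]
  obtain ⟨q, rfl⟩ := dvd_iff_isRoot.2 hw
  have := laguerre_inequality (hp.of_dvd hp0 (dvd_mul_left q _)) w
  simp only [iterDeriv_X_sub_C_mul, sub_self, zero_mul, zero_add, Nat.cast_one, Nat.cast_ofNat,
    Nat.add_one_sub_one]
  linarith

variable {p : ℝ[X]} {w : ℝ}

lemma X_sub_C_mul_iterDeriv_nonneg {q : ℝ[X]} {r : ℝ} (hr : r ≤ w)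
    (hq : ∀ i, 0 ≤ iterDeriv q i w) (i : ℕ) : 0 ≤ iterDeriv ((X - C r) * q) i w := by
  rw [iterDeriv_X_sub_C_mul]
  have := mul_nonneg (sub_nonneg.2 hr) (hq i)
  have := hq (i - 1)
  positivity

lemma C_iterDeriv_nonneg {c : ℝ} (hc : 0 ≤ c) (i : ℕ) : 0 ≤ iterDeriv (C c) i w := by
  rcases i with _ | i
  · simpa [iterDeriv] using hc
  · simp [iterDeriv, iterate_derivative_C]

lemma iterDeriv_nonneg (hp : p.Splits) (hlead : 0 ≤ p.leadingCoeff)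
    (hroots : ∀ r ∈ p.roots, r ≤ w) (i : ℕ) : 0 ≤ iterDeriv p i w :=
  splits_induction (P := fun p => ∀ i, 0 ≤ iterDeriv p i w) hp (C_iterDeriv_nonneg hlead)
    (fun r hr _ ih => X_sub_C_mul_iterDeriv_nonneg (hroots r hr) ih) i

-- All derivatives at `w` are nonnegative, so truncating the Taylor expansion at `w` only loses.
lemma taylor_two_le_iterDeriv_zero (hp : p.Splits) (hlead : 0 ≤ p.leadingCoeff)
    (hroots : ∀ r ∈ p.roots, r ≤ w) {z : ℝ} (hz : w ≤ z) :
    iterDeriv p 0 w + (z - w) * iterDeriv p 1 w + (z - w) ^ 2 / 2 * iterDeriv p 2 w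
      ≤ iterDeriv p 0 z := by
  refine (splits_induction (P := fun p => (∀ i, 0 ≤ iterDeriv p i w) ∧
    iterDeriv p 0 w + (z - w) * iterDeriv p 1 w + (z - w) ^ 2 / 2 * iterDeriv p 2 w
      ≤ iterDeriv p 0 z) hp ⟨C_iterDeriv_nonneg hlead, by simp [iterDeriv]⟩
    fun r hr q ⟨hq, ih⟩ => ⟨X_sub_C_mul_iterDeriv_nonneg (hroots r hr) hq, ?_⟩).2
  have hzr : r ≤ z := (hroots r hr).trans hz
  have := mul_le_mul_of_nonneg_left ih (sub_nonneg.2 hzr)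
  have := mul_nonneg (pow_nonneg (sub_nonneg.2 hz) 3) (hq 2)
  simp only [iterDeriv_X_sub_C_mul, Nat.add_one_sub_one, Nat.cast_zero, Nat.cast_one,
    Nat.cast_ofNat, tsub_self, zero_mul, add_zero, one_mul]
  linarith

end RealRooted

/-! ### Interpolation bounds for derivatives -/

/-- The Wronskian `F_k G_{k+1} - F_{k+1} G_k` at `x` of the `k`-th terms of two derivative chains.
As a function of `F` it is the linear combination of `F_k(x)` and `F_{k+1}(x)` that vanishes
at `F = G`. -/
def derivWronskian (k : ℕ) (x : ℝ) (F G : ℕ → ℝ → ℝ) : ℝ :=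
  F k x * G (k + 1) x - F (k + 1) x * G k x

/-- The chain version of the class `W^n_∞(σ)`, on an arbitrary interval `[a, b]`. -/
structure IsBoundedChain (n : ℕ) (σ : ℝ) (F : ℕ → ℝ → ℝ) (a b : ℝ) : Prop where
  isDerivChain : IsDerivChain n F a b
  abs_zero_le : ∀ x ∈ Icc a b, |F 0 x| ≤ 1
  abs_last_le : ∀ x ∈ Icc a b, |F n x| ≤ σ

section Interpolation

variable {n k : ℕ} {a b x : ℝ}

lemma derivWronskian_X_sub_C_mul (r : ℝ) (q : ℝ[X]) :
    derivWronskian k x (iterDeriv q) (iterDeriv ((X - C r) * q))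
      = (k + 1) * iterDeriv q k x ^ 2 - k * iterDeriv q (k - 1) x * iterDeriv q (k + 1) x := by
  simp only [derivWronskian, iterDeriv_X_sub_C_mul, Nat.add_one_sub_one]
  push_cast
  ring

lemma derivWronskian_X_sub_C_mul_nonneg (r : ℝ) {q : ℝ[X]} (hq : q.Splits) :
    0 ≤ derivWronskian k x (iterDeriv q) (iterDeriv ((X - C r) * q)) := by
  rw [derivWronskian_X_sub_C_mul]
  rcases k with _ | j
  · simpa using sq_nonneg _
  have := mul_le_mul_of_nonneg_left (laguerre_inequality_iterDeriv hq j x)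
    (Nat.cast_nonneg (α := ℝ) (j + 1))
  rw [Nat.add_sub_cancel]
  nlinarith [sq_nonneg (iterDeriv q (j + 1) x)]

lemma splits_nodal (s : Finset ℝ) : (Lagrange.nodal s id).Splits :=
  Splits.prod fun _ _ => Splits.X_sub_C _

lemma derivWronskian_nodal_erase_nonneg {s : Finset ℝ} {r : ℝ} (hr : r ∈ s) :
    0 ≤ derivWronskian k x (iterDeriv (Lagrange.nodal (s.erase r) id))
      (iterDeriv (Lagrange.nodal s id)) := by
  rw [Lagrange.nodal_eq_mul_nodal_erase hr]
  exact derivWronskian_X_sub_C_mul_nonneg _ (splits_nodal _)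

lemma derivWronskian_interpolate (s : Finset ℝ) (f : ℝ → ℝ) (G : ℕ → ℝ → ℝ) :
    derivWronskian k x (iterDeriv (Lagrange.interpolate s id f)) G
      = ∑ r ∈ s, f r / (derivative (Lagrange.nodal s id)).eval r *
          derivWronskian k x (iterDeriv (Lagrange.nodal (s.erase r) id)) G := by
  have hL : Lagrange.interpolate s id f = ∑ r ∈ s,
      C (f r / (derivative (Lagrange.nodal s id)).eval r) * Lagrange.nodal (s.erase r) id := by
    rw [Lagrange.interpolate_eq_nodalWeight_mul_nodal_div_X_sub_C]
    refine Finset.sum_congr rfl fun r hr => ?_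
    rw [← Lagrange.nodal_erase_eq_nodal_div hr, Lagrange.nodalWeight_eq_eval_derivative_nodal hr,
      id, mul_right_comm, ← C_mul, div_eq_inv_mul]
  simp only [derivWronskian, hL, iterDeriv_sum, iterDeriv_C_mul, Finset.sum_mul,
    ← Finset.sum_sub_distrib]
  exact Finset.sum_congr rfl fun r _ => by ring

-- Let `Ω` be the nodal polynomial. The combination of `G`, `Ω` and `(X - x) Ω` whose `k`-th and
-- `(k+1)`-st derivatives both vanish at `x` also vanishes on `s`, so its `n`-th derivative has a
-- zero.
lemma exists_factorial_mul_derivWronskian_nodal (hk : 1 ≤ k) (hkn : k + 2 ≤ n) {G : ℕ → ℝ → ℝ}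
    (hG : IsDerivChain n G a b) {s : Finset ℝ} (hcard : s.card + 1 = n)
    (hs : ∀ t ∈ s, t ∈ Icc a b ∧ G 0 t = 0) (hx : x ∈ Ioo a b) :
    ∃ ξ ∈ Icc a b, n.factorial * derivWronskian k x (iterDeriv (Lagrange.nodal s id)) G
      = derivWronskian k x (iterDeriv (Lagrange.nodal s id))
          (iterDeriv ((X - C x) * Lagrange.nodal s id)) * G n ξ := by
  set Ω := Lagrange.nodal s id with hΩ
  set q := (X - C x) * Ω with hq
  have hΩdeg : Ω.natDegree < n := by
    rw [hΩ, Lagrange.natDegree_nodal]; omega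
  have hqdeg : q.natDegree = n := by
    rw [hq, natDegree_mul (X_sub_C_ne_zero x) Lagrange.nodal_ne_zero,
      natDegree_X_sub_C, Lagrange.natDegree_nodal, add_comm, hcard]
  have hqn (t : ℝ) : iterDeriv q n t = n.factorial := by
    have hlead : q.leadingCoeff = 1 := (monic_X_sub_C x).mul Lagrange.nodal_monic
    simpa only [hqdeg, hlead, mul_one] using iterDeriv_natDegree q t
  set H : ℕ → ℝ → ℝ := fun i t =>
    derivWronskian k x (iterDeriv q) (iterDeriv Ω) * G i t
      + (derivWronskian k x (iterDeriv Ω) G * iterDeriv q i t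
        + derivWronskian k x G (iterDeriv q) * iterDeriv Ω i t) with hH
  have hHchain : IsDerivChain n H a b := (hG.const_mul _).add
    (((isDerivChain_iterDeriv q n a b).const_mul _).add
      ((isDerivChain_iterDeriv Ω n a b).const_mul _))
  have hHs (t : ℝ) (ht : t ∈ s) : H 0 t = 0 := by
    have hΩt : Ω.eval t = 0 := Lagrange.eval_nodal_at_node (v := id) ht
    simp [hH, (hs t ht).2, iterDeriv_zero, hq, hΩt]
  obtain ⟨ξ, hξ, hHξ⟩ := hHchain.exists_zero_of_double_zero hk hkn s (by omega)
    (fun t ht => ⟨(hs t ht).1, hHs t ht⟩) hx (by simp only [hH, derivWronskian]; ring)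
    (by simp only [hH, derivWronskian]; ring)
  refine ⟨ξ, hξ, ?_⟩
  simp only [hH, hqn, iterDeriv_eq_zero hΩdeg, derivWronskian] at hHξ ⊢
  linarith

lemma exists_factorial_mul_derivWronskian_sub_interpolate (hk : 1 ≤ k) (hkn : k + 2 ≤ n)
    {F : ℕ → ℝ → ℝ} (hF : IsDerivChain n F a b) {s : Finset ℝ} (hcard : s.card + 1 = n)
    (hs : ∀ t ∈ s, t ∈ Icc a b) (hx : x ∈ Ioo a b) :
    ∃ ξ ∈ Icc a b, n.factorial *
        (derivWronskian k x F (iterDeriv (Lagrange.nodal s id)) - derivWronskian k x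
          (iterDeriv (Lagrange.interpolate s id (F 0))) (iterDeriv (Lagrange.nodal s id)))
      = -(derivWronskian k x (iterDeriv (Lagrange.nodal s id))
          (iterDeriv ((X - C x) * Lagrange.nodal s id)) * F n ξ) := by
  set L := Lagrange.interpolate s id (F 0)
  have hLdeg : L.natDegree < n := by
    have : L.natDegree ≤ s.card - 1 := natDegree_le_of_degree_le
      (Lagrange.degree_interpolate_le (F 0) (injOn_id (s : Set ℝ)))
    omega
  have hLs (t : ℝ) (ht : t ∈ s) : F 0 t + -1 * iterDeriv L 0 t = 0 := by
    have hLt : L.eval t = F 0 t := Lagrange.eval_interpolate_at_node (F 0) (injOn_id _) ht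
    simp [iterDeriv_zero, hLt]
  obtain ⟨ξ, hξ, h⟩ := exists_factorial_mul_derivWronskian_nodal hk hkn
    (hF.add ((isDerivChain_iterDeriv L n a b).const_mul (-1))) hcard
    (fun t ht => ⟨hs t ht, hLs t ht⟩) hx
  refine ⟨ξ, hξ, ?_⟩
  simp only [derivWronskian, iterDeriv_eq_zero hLdeg] at h ⊢
  linarith

lemma derivWronskian_interpolate_eval {s : Finset ℝ} {Q : ℝ[X]} (hQdeg : Q.natDegree ≤ s.card) :
    derivWronskian k x (iterDeriv (Lagrange.interpolate s id fun r => Q.eval r))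
        (iterDeriv (Lagrange.nodal s id))
      = derivWronskian k x (iterDeriv Q) (iterDeriv (Lagrange.nodal s id)) := by
  set Ω := Lagrange.nodal s id with hΩ
  have hmonic : Ω.Monic := Lagrange.nodal_monic
  have hrem : Q %ₘ Ω = Lagrange.interpolate s id fun r => Q.eval r := by
    refine Lagrange.eq_interpolate_of_eval_eq _ (injOn_id _) ?_ fun r hr => ?_
    · simpa [hΩ] using degree_modByMonic_lt Q hmonic
    · have hr0 : Ω.eval r = 0 := Lagrange.eval_nodal_at_node (v := id) hr
      simp [modByMonic_eq_sub_mul_div, hr0]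
  obtain ⟨c, hc⟩ : ∃ c, C c = Q /ₘ Ω := by
    refine natDegree_eq_zero.1 ?_
    rw [natDegree_divByMonic _ hmonic, hΩ, Lagrange.natDegree_nodal, Nat.sub_eq_zero_of_le hQdeg]
  conv_rhs => rw [← modByMonic_add_div Q Ω, ← hc, hrem, mul_comm]
  simp only [derivWronskian, iterDeriv_add, iterDeriv_C_mul]
  ring

lemma abs_derivWronskian_interpolate_le {s : Finset ℝ} {f : ℝ → ℝ} (hf : ∀ r ∈ s, |f r| ≤ 1)
    {Q : ℝ[X]} (hQdeg : Q.natDegree ≤ s.card)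
    (hQ : ∀ r ∈ s, |(derivative (Lagrange.nodal s id)).eval r|
      ≤ Q.eval r * (derivative (Lagrange.nodal s id)).eval r) :
    |derivWronskian k x (iterDeriv (Lagrange.interpolate s id f))
        (iterDeriv (Lagrange.nodal s id))|
      ≤ derivWronskian k x (iterDeriv Q) (iterDeriv (Lagrange.nodal s id)) := by
  rw [← derivWronskian_interpolate_eval hQdeg]
  rw [derivWronskian_interpolate, derivWronskian_interpolate]
  refine (Finset.abs_sum_le_sum_abs _ _).trans (Finset.sum_le_sum fun r hr => ?_)
  set d := (derivative (Lagrange.nodal s id)).eval r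
  have hW := derivWronskian_nodal_erase_nonneg (k := k) (x := x) hr
  rw [abs_mul, abs_of_nonneg hW]
  refine mul_le_mul_of_nonneg_right ?_ hW
  rcases eq_or_ne d 0 with hd | hd
  · simp [hd]
  calc |f r / d| ≤ 1 / |d| := by rw [abs_div]; gcongr; exact hf r hr
    _ = |d| / d ^ 2 := by rw [← sq_abs d]; field_simp
    _ ≤ Q.eval r * d / d ^ 2 := by gcongr; exact hQ r hr
    _ = Q.eval r / d := by field_simp

lemma IsBoundedChain.abs_derivWronskian_nodal_le (hk : 1 ≤ k) (hkn : k + 2 ≤ n) {σ : ℝ}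
    {F : ℕ → ℝ → ℝ} (hF : IsBoundedChain n σ F a b) {s : Finset ℝ} (hcard : s.card + 1 = n)
    (hs : ∀ r ∈ s, r ∈ Icc a b) {Q : ℝ[X]} (hQdeg : Q.natDegree ≤ s.card)
    (hQ : ∀ r ∈ s, |(derivative (Lagrange.nodal s id)).eval r|
      ≤ Q.eval r * (derivative (Lagrange.nodal s id)).eval r)
    (hx : x ∈ Ioo a b) :
    |derivWronskian k x F (iterDeriv (Lagrange.nodal s id))|
      ≤ derivWronskian k x (iterDeriv Q) (iterDeriv (Lagrange.nodal s id))
        + σ / n.factorial * derivWronskian k x (iterDeriv (Lagrange.nodal s id))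
          (iterDeriv ((X - C x) * Lagrange.nodal s id)) := by
  obtain ⟨ξ, hξ, h⟩ := exists_factorial_mul_derivWronskian_sub_interpolate hk hkn
    hF.isDerivChain hcard hs hx
  set Ω := Lagrange.nodal s id
  set W₀ := derivWronskian k x (iterDeriv (Lagrange.interpolate s id (F 0))) (iterDeriv Ω)
  set W₁ := derivWronskian k x (iterDeriv Ω) (iterDeriv ((X - C x) * Ω))
  have hW₁ : 0 ≤ W₁ := derivWronskian_X_sub_C_mul_nonneg x (splits_nodal s)
  have hremainder : |derivWronskian k x F (iterDeriv Ω) - W₀| ≤ σ / n.factorial * W₁ := by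
    have hfac : (0 : ℝ) < n.factorial := by positivity
    rw [div_mul_eq_mul_div, le_div_iff₀' hfac, ← abs_of_pos hfac, ← abs_mul, h, abs_neg, abs_mul,
      abs_of_nonneg hW₁, mul_comm]
    gcongr
    exact hF.abs_last_le ξ hξ
  have hW₀ := abs_derivWronskian_interpolate_le (k := k) (x := x)
    (fun r hr => hF.abs_zero_le r (hs r hr)) hQdeg hQ
  calc |derivWronskian k x F (iterDeriv Ω)|
      = |W₀ + (derivWronskian k x F (iterDeriv Ω) - W₀)| := by rw [add_sub_cancel]
    _ ≤ _ := (abs_add_le _ _).trans (add_le_add hW₀ hremainder)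

lemma IsBoundedChain.abs_derivWronskian_le (hk : 1 ≤ k) (hkn : k + 2 ≤ n) {σ : ℝ}
    {F : ℕ → ℝ → ℝ} (hF : IsBoundedChain n σ F a b) {p : ℝ[X]} (hp : p.Splits)
    (hnodup : p.roots.Nodup) (hlead : 0 < p.leadingCoeff) (hdeg : p.natDegree + 1 = n)
    (hroots : ∀ r ∈ p.roots, r ∈ Icc a b) {Q : ℝ[X]} (hQdeg : Q.natDegree ≤ p.natDegree)
    (hQ : ∀ r ∈ p.roots, |(derivative p).eval r| ≤ Q.eval r * (derivative p).eval r)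
    (hx : x ∈ Ioo a b) :
    |derivWronskian k x F (iterDeriv p)|
      ≤ derivWronskian k x (iterDeriv Q) (iterDeriv p)
        + σ / (n.factorial * p.leadingCoeff)
          * derivWronskian k x (iterDeriv p) (iterDeriv ((X - C x) * p)) := by
  set c := p.leadingCoeff
  set s := p.roots.toFinset with hs
  have hmem {r : ℝ} : r ∈ s ↔ r ∈ p.roots := Multiset.mem_toFinset
  have hcard : s.card = p.natDegree := by
    rw [hp.natDegree_eq_card_roots, Multiset.toFinset_card_of_nodup hnodup]
  obtain ⟨Ω, hΩ⟩ : ∃ Ω, Ω = Lagrange.nodal s id := ⟨_, rfl⟩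
  have hpΩ : p = C c * Ω := by
    conv_lhs => rw [hp.eq_prod_roots]
    rw [hΩ, Lagrange.nodal_eq, Finset.prod, hs, Multiset.toFinset_val, hnodup.dedup]
    rfl
  have key := hF.abs_derivWronskian_nodal_le hk hkn (s := s) (by omega)
    (fun r hr => hroots r (hmem.1 hr)) (Q := Q) (by omega) (fun r hr => ?_) hx
  · rw [← hΩ] at key
    rw [hpΩ, mul_left_comm]
    have hscale : derivWronskian k x F (iterDeriv (C c * Ω))
        = c * derivWronskian k x F (iterDeriv Ω) := by
      simp only [derivWronskian, iterDeriv_C_mul]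
      ring
    rw [hscale, abs_mul, abs_of_pos hlead]
    refine (mul_le_mul_of_nonneg_left key hlead.le).trans_eq ?_
    simp only [derivWronskian, iterDeriv_C_mul]
    field_simp
  · rw [← hΩ]
    have := hQ r (hmem.1 hr)
    rw [hpΩ, derivative_C_mul, eval_mul, eval_C, abs_mul, abs_of_pos hlead, mul_left_comm] at this
    exact le_of_mul_le_mul_left this hlead

end Interpolation

/-! ### Chebyshev polynomials and their interpolation bounds -/

section Chebyshev

variable {N k : ℕ} {x : ℝ}

lemma iterDeriv_derivative_T (N j : ℕ) (x : ℝ) :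
    iterDeriv (derivative (Chebyshev.T ℝ N)) j x = chebDeriv N (j + 1) x :=
  iterDeriv_derivative _ _ _

lemma one_sub_sq_mul_chebDeriv (N j : ℕ) (x : ℝ) :
    (1 - x ^ 2) * chebDeriv N (j + 2) x
      = (2 * j + 1) * x * chebDeriv N (j + 1) x - ((N : ℝ) ^ 2 - j ^ 2) * chebDeriv N j x := by
  simpa [chebDeriv] using Chebyshev.one_sub_X_sq_mul_iterate_derivative_T_eval (R := ℝ) N j x

lemma one_sub_sq_mul_chebDeriv_add_one (N : ℕ) (hk : 1 ≤ k) (x : ℝ) :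
    (1 - x ^ 2) * chebDeriv N (k + 1) x
      = (2 * k - 1) * x * chebDeriv N k x
        - ((N : ℝ) ^ 2 - (k - 1) ^ 2) * chebDeriv N (k - 1) x := by
  obtain ⟨j, rfl⟩ := Nat.exists_eq_add_of_le' hk
  rw [Nat.add_sub_cancel]
  push_cast
  linear_combination one_sub_sq_mul_chebDeriv N j x

lemma natDegree_derivative_T (N : ℕ) : (derivative (Chebyshev.T ℝ N)).natDegree = N - 1 := by
  rw [natDegree_derivative, Chebyshev.natDegree_T, Int.natAbs_natCast]

lemma leadingCoeff_derivative_T (N : ℕ) :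
    (derivative (Chebyshev.T ℝ N)).leadingCoeff = N * 2 ^ (N - 1) := by
  rw [leadingCoeff_derivative, Chebyshev.leadingCoeff_T, Chebyshev.natDegree_T, Int.natAbs_natCast,
    mul_comm]

lemma splits_T (N : ℕ) : (Chebyshev.T ℝ N).Splits := by
  rw [splits_iff_card_roots, Chebyshev.natDegree_T, Int.natAbs_natCast, Chebyshev.roots_T_real,
    Finset.card_val, Finset.card_image_of_injOn
      ((Finset.range N).nodup_map_iff_injOn.1 (Chebyshev.roots_T_real_nodup N)), Finset.card_range]

lemma roots_derivative_T (hN : N ≠ 0) :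
    (derivative (Chebyshev.T ℝ N)).roots
      = ((Finset.range (N - 1)).image fun i : ℕ => Real.cos ((i + 1) * Real.pi / N)).val := by
  obtain ⟨m, rfl⟩ := Nat.exists_eq_add_one_of_ne_zero hN
  have hm : (m + 1 : ℝ) ≠ 0 := by positivity
  have hU : derivative (Chebyshev.T ℝ ((m + 1 : ℕ) : ℤ)) = C (m + 1 : ℝ) * Chebyshev.U ℝ m := by
    simp [Chebyshev.T_derivative_eq_U]
  rw [hU, roots_C_mul _ hm, Chebyshev.roots_U_real]
  simp

lemma mem_Ioo_of_mem_roots_derivative_T (hN : N ≠ 0) {r : ℝ}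
    (hr : r ∈ (derivative (Chebyshev.T ℝ N)).roots) : r ∈ Ioo (-1 : ℝ) 1 := by
  rw [roots_derivative_T hN, Finset.mem_val] at hr
  obtain ⟨i, hi, rfl⟩ := Finset.mem_image.1 hr
  have hiN : (i + 1 : ℝ) < N := by exact_mod_cast Nat.add_lt_of_lt_sub (Finset.mem_range.1 hi)
  have hpos : 0 < (i + 1) * Real.pi / N := by positivity
  have hlt : (i + 1) * Real.pi / N < Real.pi := by
    rw [div_lt_iff₀ (by positivity), mul_comm Real.pi]
    gcongr
  constructor
  · simpa using Real.cos_lt_cos_of_nonneg_of_le_pi hpos.le le_rfl hlt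
  · simpa using Real.cos_lt_cos_of_nonneg_of_le_pi le_rfl hlt.le hpos

lemma abs_eval_T_of_mem_roots_derivative_T (hN : N ≠ 0) {r : ℝ}
    (hr : r ∈ (derivative (Chebyshev.T ℝ N)).roots) : |(Chebyshev.T ℝ N).eval r| = 1 := by
  rw [roots_derivative_T hN, Finset.mem_val] at hr
  obtain ⟨i, hi, rfl⟩ := Finset.mem_image.1 hr
  rw [Finset.mem_range] at hi
  exact (Chebyshev.abs_eval_T_real_eq_one_iff hN _).2 ⟨i + 1, by omega, by push_cast; rfl⟩

lemma abs_eq_mul_of_abs_eq_one {t d : ℝ} (ht : |t| = 1) (htd : 0 ≤ t * d) : |d| = t * d := by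
  rw [← abs_of_nonneg htd, abs_mul, ht, one_mul]

lemma neg_eval_T_mul_eval_derivative_nonneg (hN : N ≠ 0) {r : ℝ}
    (hr : r ∈ (derivative (Chebyshev.T ℝ N)).roots) :
    0 ≤ -(Chebyshev.T ℝ N).eval r * (derivative (derivative (Chebyshev.T ℝ N))).eval r := by
  have hode := one_sub_sq_mul_chebDeriv N 0 r
  have hroot : chebDeriv N 1 r = 0 := isRoot_of_mem_roots hr
  have hr' := mem_Ioo_of_mem_roots_derivative_T hN hr
  have hpos : 0 < 1 - r ^ 2 := by nlinarith [hr'.1, hr'.2]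
  refine nonneg_of_mul_nonneg_right (a := 1 - r ^ 2) ?_ hpos
  rw [zero_add, zero_add, hroot] at hode
  change (1 - r ^ 2) * (derivative (derivative (Chebyshev.T ℝ N))).eval r
    = _ - _ * (Chebyshev.T ℝ N).eval r at hode
  rw [mul_left_comm, hode]
  have := mul_self_nonneg (N * (Chebyshev.T ℝ N).eval r)
  push_cast
  linarith

lemma chebDeriv_self_pos (n : ℕ) (x : ℝ) : 0 < chebDeriv n n x := by
  have htop := iterDeriv_natDegree (Chebyshev.T ℝ n) x
  rw [Chebyshev.natDegree_T, Int.natAbs_natCast, Chebyshev.leadingCoeff_T,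
    Int.natAbs_natCast] at htop
  exact htop.ge.trans_lt' (by positivity)

lemma chebDeriv_ne_zero_or (hkN : k ≤ N) (hx : x ∈ Ioo (-1 : ℝ) 1) :
    chebDeriv N k x ≠ 0 ∨ chebDeriv N (k + 1) x ≠ 0 := by
  by_contra! h
  have hpos : 0 < 1 - x ^ 2 := by nlinarith [hx.1, hx.2]
  have hvanish (i : ℕ) : chebDeriv N (k + i) x = 0 ∧ chebDeriv N (k + i + 1) x = 0 := by
    induction i with
    | zero => exact h
    | succ i ih =>
      refine ⟨ih.2, ?_⟩
      have hode := one_sub_sq_mul_chebDeriv N (k + i) x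
      rw [ih.1, ih.2, mul_zero, mul_zero, sub_zero] at hode
      exact (mul_eq_zero.1 hode).resolve_left hpos.ne'
  have hzero := (hvanish (N - k)).1
  rw [Nat.add_sub_cancel' hkN] at hzero
  exact (chebDeriv_self_pos N x).ne' hzero

lemma sigmaN_pos (n : ℕ) : 0 < sigmaN n := by
  unfold sigmaN
  positivity

end Chebyshev

section ChebyshevBounds

variable {N k : ℕ} {x σ : ℝ} {F : ℕ → ℝ → ℝ}

lemma natDegree_X_mul_derivative_T_sub_T_lt (hN : 2 ≤ N) :
    (C (1 / (N : ℝ)) * ((X - C 0) * derivative (Chebyshev.T ℝ N)) - Chebyshev.T ℝ N).natDegree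
      < N - 1 := by
  obtain ⟨m, rfl⟩ := Nat.exists_eq_add_of_le' hN
  have hC : C (1 / ((m : ℝ) + 2)) * C ((m : ℝ) + 2) = 1 := by
    rw [← C_mul, one_div_mul_cancel (by positivity), C_1]
  have hU : C (1 / ((m + 2 : ℕ) : ℝ)) * ((X - C 0) * derivative (Chebyshev.T ℝ ((m + 2 : ℕ) : ℤ)))
      - Chebyshev.T ℝ ((m + 2 : ℕ) : ℤ) = Chebyshev.U ℝ m := by
    have h := Chebyshev.T_eq_X_mul_U_sub_U ℝ (m : ℤ)
    rw [Chebyshev.T_derivative_eq_U]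
    push_cast
    simp only [map_add, map_natCast, map_ofNat, C_0] at hC ⊢
    rw [h, show (m : ℤ) + 2 - 1 = m + 1 by ring]
    linear_combination X * Chebyshev.U ℝ (m + 1 : ℤ) * hC
  rw [hU, Chebyshev.natDegree_U_natCast]
  omega

lemma IsBoundedChain.abs_derivWronskian_derivative_T_le (hk : 1 ≤ k) (hkN : k + 2 ≤ N)
    (hF : IsBoundedChain N σ F (-1) 1) (hx : x ∈ Ioo (-1 : ℝ) 1) :
    |derivWronskian k x F (iterDeriv (derivative (Chebyshev.T ℝ N)))|
      ≤ derivWronskian k x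
          (iterDeriv (C (1 / (N : ℝ)) * ((X - C 0) * derivative (Chebyshev.T ℝ N))
            - Chebyshev.T ℝ N))
          (iterDeriv (derivative (Chebyshev.T ℝ N)))
        + 1 / N * (σ / sigmaN N) * derivWronskian k x (iterDeriv (derivative (Chebyshev.T ℝ N)))
          (iterDeriv ((X - C x) * derivative (Chebyshev.T ℝ N))) := by
  have hN : N ≠ 0 := by omega
  have hfac : σ / (N.factorial * (derivative (Chebyshev.T ℝ N)).leadingCoeff)
      = 1 / N * (σ / sigmaN N) := by
    rw [leadingCoeff_derivative_T, sigmaN]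
    field_simp
  rw [← hfac]
  refine hF.abs_derivWronskian_le hk hkN (splits_derivative (splits_T N))
    (by rw [roots_derivative_T hN]; exact Finset.nodup _)
    (by rw [leadingCoeff_derivative_T]; positivity)
    (by rw [natDegree_derivative_T]; omega)
    (fun r hr => Ioo_subset_Icc_self (mem_Ioo_of_mem_roots_derivative_T hN hr))
    (by rw [natDegree_derivative_T]; exact (natDegree_X_mul_derivative_T_sub_T_lt (by omega)).le)
    (fun r hr => ?_) hx
  have hr0 : (derivative (Chebyshev.T ℝ N)).eval r = 0 := isRoot_of_mem_roots hr
  rw [eval_sub, eval_mul, eval_mul, hr0, mul_zero, mul_zero, zero_sub]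
  refine (abs_eq_mul_of_abs_eq_one ?_ (neg_eval_T_mul_eval_derivative_nonneg hN hr)).le
  rw [abs_neg, abs_eval_T_of_mem_roots_derivative_T hN hr]

lemma IsBoundedChain.abs_le_of_chebDeriv_eq_zero (hk : 1 ≤ k) (hkN : k + 2 ≤ N)
    (hF : IsBoundedChain N σ F (-1) 1) (hx : x ∈ Ioo (-1 : ℝ) 1) (hz : chebDeriv N (k + 1) x = 0) :
    |F k x| ≤ ((N - k) / N + k / N * (σ / sigmaN N)) * |chebDeriv N k x| := by
  have hN : (0 : ℝ) < N := by exact_mod_cast (by omega : 0 < N)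
  have key := hF.abs_derivWronskian_derivative_T_le hk hkN hx
  set b := chebDeriv N k x with hb
  set d := chebDeriv N (k + 2) x with hd
  have hd0 : d ≠ 0 := (chebDeriv_ne_zero_or (by omega) hx).resolve_left (not_not.2 hz)
  have hT : iterDeriv (Chebyshev.T ℝ N) k x = b := rfl
  have hT' : iterDeriv (Chebyshev.T ℝ N) (k + 1) x = 0 := hz
  rw [derivWronskian_X_sub_C_mul] at key
  simp only [derivWronskian, iterDeriv_sub, iterDeriv_C_mul, iterDeriv_X_sub_C_mul,
    iterDeriv_derivative_T, hz, hT, hT', Nat.sub_add_cancel hk, ← hb, ← hd, mul_zero, sub_zero,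
    abs_mul] at key
  have hbd : b * d ≤ 0 := by
    have := laguerre_inequality_iterDeriv (splits_T N) k x
    rwa [hT', sq, zero_mul] at this
  refine le_of_mul_le_mul_right (key.trans_eq ?_) (abs_pos.2 hd0)
  rw [mul_assoc _ |b|, ← abs_mul, abs_of_nonpos hbd]
  field_simp
  ring

/-- For `ε = ±1`, a polynomial whose roots are the local extrema of `T_N` in `(-1, 1)` and the
endpoint `ε`; it replaces `T_N'` when one more interpolation node is available. -/
noncomputable def chebNodal (N : ℕ) (ε : ℝ) : ℝ[X] := (X - C ε) * derivative (Chebyshev.T ℝ N)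

lemma derivative_T_ne_zero (hN : N ≠ 0) : derivative (Chebyshev.T ℝ N) ≠ 0 := by
  rw [← leadingCoeff_ne_zero, leadingCoeff_derivative_T]
  positivity

lemma leadingCoeff_chebNodal (N : ℕ) (ε : ℝ) : (chebNodal N ε).leadingCoeff = N * 2 ^ (N - 1) := by
  rw [chebNodal, leadingCoeff_mul, leadingCoeff_X_sub_C, one_mul, leadingCoeff_derivative_T]

lemma natDegree_chebNodal (hN : N ≠ 0) (ε : ℝ) : (chebNodal N ε).natDegree = N := by
  rw [chebNodal, natDegree_mul (X_sub_C_ne_zero _) (derivative_T_ne_zero hN), natDegree_X_sub_C,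
    natDegree_derivative_T]
  omega

lemma roots_chebNodal (hN : N ≠ 0) (ε : ℝ) :
    (chebNodal N ε).roots = ε ::ₘ (derivative (Chebyshev.T ℝ N)).roots := by
  rw [chebNodal, roots_mul (mul_ne_zero (X_sub_C_ne_zero _) (derivative_T_ne_zero hN)),
    roots_X_sub_C, Multiset.singleton_add]

lemma splits_chebNodal (N : ℕ) (ε : ℝ) : (chebNodal N ε).Splits :=
  (Splits.X_sub_C _).mul (splits_derivative (splits_T N))

lemma eval_derivative_chebNodal (N : ℕ) (ε r : ℝ) :
    (derivative (chebNodal N ε)).eval r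
      = (r - ε) * (derivative (derivative (Chebyshev.T ℝ N))).eval r
        + (derivative (Chebyshev.T ℝ N)).eval r := by
  rw [chebNodal, derivative_mul, derivative_X_sub_C]
  simp [add_comm]

lemma abs_eval_derivative_chebNodal (hN : N ≠ 0) {ε : ℝ} (hε : ε ^ 2 = 1) {r : ℝ}
    (hr : r ∈ (chebNodal N ε).roots) :
    |(derivative (chebNodal N ε)).eval r|
      = (C ε * Chebyshev.T ℝ N).eval r * (derivative (chebNodal N ε)).eval r := by
  have habs : |ε| = 1 := by rcases sq_eq_one_iff.1 hε with rfl | rfl <;> norm_num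
  rw [eval_derivative_chebNodal, eval_mul, eval_C]
  rw [roots_chebNodal hN, Multiset.mem_cons] at hr
  rcases hr with rfl | hr
  · have hT : |(Chebyshev.T ℝ N).eval r| = 1 := by
      rcases sq_eq_one_iff.1 hε with rfl | rfl
      · simp
      · rcases Int.units_eq_one_or (Int.negOnePow N) with h | h <;> simp [h]
    have hode : r * (derivative (Chebyshev.T ℝ N)).eval r
        = (N : ℝ) ^ 2 * (Chebyshev.T ℝ N).eval r := by
      have := one_sub_sq_mul_chebDeriv N 0 r
      rw [hε, sub_self, zero_mul] at this
      change (0 : ℝ) = _ * r * (derivative (Chebyshev.T ℝ N)).eval r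
        - _ * (Chebyshev.T ℝ N).eval r at this
      push_cast at this
      linarith
    rw [sub_self, zero_mul, zero_add]
    refine abs_eq_mul_of_abs_eq_one (by rw [abs_mul, habs, hT, one_mul]) ?_
    rw [mul_right_comm, hode, mul_assoc]
    exact mul_nonneg (sq_nonneg _) (mul_self_nonneg _)
  · have hr0 : (derivative (Chebyshev.T ℝ N)).eval r = 0 := isRoot_of_mem_roots hr
    have hr' := mem_Ioo_of_mem_roots_derivative_T hN hr
    have hεr : 0 ≤ 1 - ε * r := by
      rcases sq_eq_one_iff.1 hε with rfl | rfl <;> linarith [hr'.1, hr'.2]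
    rw [hr0, add_zero]
    refine abs_eq_mul_of_abs_eq_one
      (by rw [abs_mul, habs, abs_eval_T_of_mem_roots_derivative_T hN hr, one_mul]) ?_
    calc 0 ≤ (1 - ε * r) * (-(Chebyshev.T ℝ N).eval r
          * (derivative (derivative (Chebyshev.T ℝ N))).eval r) :=
        mul_nonneg hεr (neg_eval_T_mul_eval_derivative_nonneg hN hr)
      _ = _ := by linear_combination ((Chebyshev.T ℝ N).eval r
          * (derivative (derivative (Chebyshev.T ℝ N))).eval r) * hε

lemma IsBoundedChain.abs_derivWronskian_chebNodal_le (hk : 1 ≤ k) (hkN : k + 1 ≤ N)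
    (hF : IsBoundedChain (N + 1) σ F (-1) 1) (hx : x ∈ Ioo (-1 : ℝ) 1)
    {ε : ℝ} (hε : ε ^ 2 = 1) :
    |derivWronskian k x F (iterDeriv (chebNodal N ε))|
      ≤ derivWronskian k x (iterDeriv (C ε * Chebyshev.T ℝ N))
          (iterDeriv (chebNodal N ε))
        + 2 / N * (σ / sigmaN (N + 1)) *
          derivWronskian k x (iterDeriv (chebNodal N ε))
            (iterDeriv ((X - C x) * (chebNodal N ε))) := by
  have hN : N ≠ 0 := by omega
  have hfac : σ / ((N + 1).factorial * (chebNodal N ε).leadingCoeff)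
      = 2 / N * (σ / sigmaN (N + 1)) := by
    obtain ⟨m, rfl⟩ := Nat.exists_eq_add_one_of_ne_zero hN
    rw [leadingCoeff_chebNodal, sigmaN, Nat.add_sub_cancel, Nat.add_sub_cancel, pow_succ]
    field_simp
  have hmem : ε ∈ Icc (-1 : ℝ) 1 ∧ ε ∉ Ioo (-1 : ℝ) 1 := by
    rcases sq_eq_one_iff.1 hε with rfl | rfl <;> norm_num
  rw [← hfac]
  refine hF.abs_derivWronskian_le hk (by omega)
    (splits_chebNodal N ε) ?_ (by rw [leadingCoeff_chebNodal]; positivity)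
    (by rw [natDegree_chebNodal hN]) (fun r hr => ?_) ?_
    (fun r hr => (abs_eval_derivative_chebNodal hN hε hr).le) hx
  · rw [roots_chebNodal hN, Multiset.nodup_cons]
    refine ⟨fun h => hmem.2 (mem_Ioo_of_mem_roots_derivative_T hN h), ?_⟩
    rw [roots_derivative_T hN]
    exact Finset.nodup _
  · rw [roots_chebNodal hN, Multiset.mem_cons] at hr
    rcases hr with rfl | hr
    · exact hmem.1
    · exact Ioo_subset_Icc_self (mem_Ioo_of_mem_roots_derivative_T hN hr)
  · rw [natDegree_chebNodal hN, natDegree_C_mul (by rintro h; simp_all), Chebyshev.natDegree_T,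
      Int.natAbs_natCast]

/-- The value at `x`, with `A = T_N^{(k)}(x)` and `b = T_N^{(k+1)}(x)`, of the `σ`-free part of the
bound for `|F_k(x)|` at a zero `x` of `F_{k+1}`. -/
def freeForm (N k x A b : ℝ) : ℝ :=
  (1 - x ^ 2) * b ^ 2 + (N ^ 2 - k ^ 2) * A ^ 2 - 2 * k * x * A * b

/-- The coefficient of `(2 / N) * (σ / σ_{N+1})` in the bound for `|F_k(x)|` at a zero `x` of
`F_{k+1}`, in the variables of `freeForm`. -/
noncomputable def sigmaForm (N k x A b : ℝ) : ℝ :=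
  k * (N ^ 2 + k) * A ^ 2
    + (k + 1) * (N ^ 2 + k - 1) / (N ^ 2 - (k - 1) ^ 2) * ((1 - x ^ 2) * b ^ 2)
    - ((2 * k + 1) * N ^ 2 + 2 * k * (k - 1)) / (N ^ 2 - (k - 1) ^ 2) * (k * x * A * b)

lemma IsBoundedChain.abs_mul_abs_le_of_sq_eq_one (hk : 1 ≤ k) (hkN : k + 1 ≤ N)
    (hF : IsBoundedChain (N + 1) σ F (-1) 1) (hx : x ∈ Ioo (-1 : ℝ) 1) (hz : F (k + 1) x = 0)
    {ε : ℝ} (hε : ε ^ 2 = 1) :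
    |F k x| * |(x - ε) * chebDeriv N (k + 2) x + (k + 1) * chebDeriv N (k + 1) x|
      ≤ derivWronskian k x (iterDeriv (C ε * Chebyshev.T ℝ N)) (iterDeriv (chebNodal N ε))
        + 2 / N * (σ / sigmaN (N + 1)) * derivWronskian k x (iterDeriv (chebNodal N ε))
            (iterDeriv ((X - C x) * chebNodal N ε)) := by
  have key := hF.abs_derivWronskian_chebNodal_le hk hkN hx hε
  rwa [derivWronskian, hz, zero_mul, sub_zero, abs_mul, chebNodal, iterDeriv_X_sub_C_mul,
    iterDeriv_derivative_T, Nat.add_sub_cancel, iterDeriv_derivative_T, Nat.cast_succ,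
    ← chebNodal] at key

lemma average_derivWronskian_T_chebNodal (hk : 1 ≤ k) :
    (1 - x) * derivWronskian k x (iterDeriv (C (-1) * Chebyshev.T ℝ N))
        (iterDeriv (chebNodal N (-1)))
      + (1 + x) * derivWronskian k x (iterDeriv (C 1 * Chebyshev.T ℝ N))
        (iterDeriv (chebNodal N 1))
      = 2 * freeForm N k x (chebDeriv N k x) (chebDeriv N (k + 1) x) := by
  have hode := one_sub_sq_mul_chebDeriv N k x
  have hT (j : ℕ) : iterDeriv (Chebyshev.T ℝ N) j x = chebDeriv N j x := rfl
  simp only [derivWronskian, iterDeriv_C_mul, chebNodal, iterDeriv_X_sub_C_mul,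
    iterDeriv_derivative_T, hT, Nat.add_sub_cancel, Nat.sub_add_cancel hk, freeForm]
  push_cast
  linear_combination (-2 * chebDeriv N k x) * hode

lemma iterDeriv_chebNodal_sub_one (hk : 1 ≤ k) (ε : ℝ) :
    iterDeriv (chebNodal N ε) (k - 1) x
      = (x - ε) * chebDeriv N k x + (k - 1) * chebDeriv N (k - 1) x := by
  obtain ⟨j, rfl⟩ := Nat.exists_eq_add_of_le' hk
  rw [chebNodal, iterDeriv_X_sub_C_mul, iterDeriv_derivative_T, Nat.add_sub_cancel]
  rcases j with _ | j
  · simp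
  · rw [iterDeriv_derivative_T, Nat.add_sub_cancel]
    push_cast
    ring

lemma average_derivWronskian_chebNodal (hk : 1 ≤ k) (hkN : k + 1 ≤ N) :
    (1 - x) * derivWronskian k x (iterDeriv (chebNodal N (-1)))
        (iterDeriv ((X - C x) * chebNodal N (-1)))
      + (1 + x) * derivWronskian k x (iterDeriv (chebNodal N 1))
        (iterDeriv ((X - C x) * chebNodal N 1))
      = 2 * sigmaForm N k x (chebDeriv N k x) (chebDeriv N (k + 1) x) := by
  have hode := one_sub_sq_mul_chebDeriv N k x
  have hC : (N : ℝ) ^ 2 - (k - 1) ^ 2 ≠ 0 := by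
    have hk' : (1 : ℝ) ≤ k := by exact_mod_cast hk
    have hkN' : (k : ℝ) + 1 ≤ N := by exact_mod_cast hkN
    nlinarith
  have hpred : chebDeriv N (k - 1) x = ((2 * k - 1) * x * chebDeriv N k x
      - (1 - x ^ 2) * chebDeriv N (k + 1) x) / ((N : ℝ) ^ 2 - (k - 1) ^ 2) := by
    rw [eq_div_iff hC]
    linear_combination one_sub_sq_mul_chebDeriv_add_one N hk x
  have hnodal (ε : ℝ) (j : ℕ) : iterDeriv (chebNodal N ε) j x
      = (x - ε) * chebDeriv N (j + 1) x
        + j * iterDeriv (derivative (Chebyshev.T ℝ N)) (j - 1) x := by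
    rw [chebNodal, iterDeriv_X_sub_C_mul, iterDeriv_derivative_T]
  rw [derivWronskian_X_sub_C_mul, derivWronskian_X_sub_C_mul]
  simp only [iterDeriv_chebNodal_sub_one hk, hnodal, iterDeriv_derivative_T,
    Nat.add_sub_cancel, Nat.sub_add_cancel hk, sigmaForm, hpred]
  push_cast
  field_simp
  linear_combination (-2 * k * chebDeriv N k x * ((N : ℝ) ^ 2 - (k - 1) ^ 2)) * hode

lemma IsBoundedChain.abs_mul_max_le (hk : 1 ≤ k) (hkN : k + 1 ≤ N)
    (hF : IsBoundedChain (N + 1) σ F (-1) 1) (hx : x ∈ Ioo (-1 : ℝ) 1) (hz : F (k + 1) x = 0) :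
    |F k x| * max |(k + 1) * chebDeriv N (k + 1) x|
        |((N : ℝ) ^ 2 - k ^ 2) * chebDeriv N k x - k * x * chebDeriv N (k + 1) x|
      ≤ freeForm N k x (chebDeriv N k x) (chebDeriv N (k + 1) x)
        + 2 / N * (σ / sigmaN (N + 1))
          * sigmaForm N k x (chebDeriv N k x) (chebDeriv N (k + 1) x) := by
  have hode := one_sub_sq_mul_chebDeriv N k x
  have hminus := mul_le_mul_of_nonneg_left
    (hF.abs_mul_abs_le_of_sq_eq_one hk hkN hx hz (ε := -1) (by norm_num)) (sub_nonneg.2 hx.2.le)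
  have hplus := mul_le_mul_of_nonneg_left
    (hF.abs_mul_abs_le_of_sq_eq_one hk hkN hx hz (ε := 1) (by norm_num))
    (show 0 ≤ 1 + x by linarith [hx.1])
  set v := (1 - x) * ((x - -1) * chebDeriv N (k + 2) x + (k + 1) * chebDeriv N (k + 1) x) with hv
  set w := (1 + x) * ((x - 1) * chebDeriv N (k + 2) x + (k + 1) * chebDeriv N (k + 1) x) with hw
  have hmax : max |(k + 1) * chebDeriv N (k + 1) x|
      |((N : ℝ) ^ 2 - k ^ 2) * chebDeriv N k x - k * x * chebDeriv N (k + 1) x|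
        ≤ (|v| + |w|) / 2 := by
    have hadd : (k + 1) * chebDeriv N (k + 1) x = (v + w) / 2 := by rw [hv, hw]; ring
    have hsub : ((N : ℝ) ^ 2 - k ^ 2) * chebDeriv N k x - k * x * chebDeriv N (k + 1) x
        = (w - v) / 2 := by rw [hv, hw]; linear_combination hode
    rw [hadd, hsub, abs_div, abs_div, abs_two]
    refine max_le ?_ ?_
    · gcongr
      exact abs_add_le v w
    · gcongr
      rw [add_comm]
      exact abs_sub w v
  refine (mul_le_mul_of_nonneg_left hmax (abs_nonneg _)).trans ?_
  rw [hv, hw, abs_mul (1 - x), abs_mul (1 + x), abs_of_nonneg (sub_nonneg.2 hx.2.le),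
    abs_of_nonneg (show 0 ≤ 1 + x by linarith [hx.1])]
  linear_combination (hminus + hplus + average_derivWronskian_T_chebNodal hk
    + 2 / N * (σ / sigmaN (N + 1)) * average_derivWronskian_chebNodal hk hkN) / 2

end ChebyshevBounds

/-! ### The largest zero of `T_n^{(k+1)}` -/

section LargestZero

variable {n N k : ℕ} {w x : ℝ}

lemma chebDeriv_add_one_one (n k : ℕ) :
    (2 * k + 1) * chebDeriv n (k + 1) 1 = ((n : ℝ) ^ 2 - k ^ 2) * chebDeriv n k 1 := by
  linear_combination -one_sub_sq_mul_chebDeriv n k 1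

lemma chebDeriv_one_pos (hk : k ≤ n) : 0 < chebDeriv n k 1 := by
  induction k with
  | zero => simp [chebDeriv]
  | succ k ih =>
    have hkn : (k : ℝ) + 1 ≤ n := by exact_mod_cast hk
    have hpos := mul_pos (show 0 < (n : ℝ) ^ 2 - k ^ 2 by nlinarith) (ih (by omega))
    rw [← chebDeriv_add_one_one] at hpos
    exact pos_of_mul_pos_right hpos (by positivity)

lemma chebDeriv_pos_of_one_le (hk : k ≤ n) (hx : 1 ≤ x) : 0 < chebDeriv n k x := by
  induction hk using Nat.decreasingInduction generalizing x with
  | self => exact chebDeriv_self_pos n x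
  | of_succ k hk ih =>
    have hderiv (y : ℝ) : HasDerivAt (chebDeriv n k) (chebDeriv n (k + 1) y) y :=
      hasDerivAt_iterDeriv _ k y
    have hmono : MonotoneOn (chebDeriv n k) (Ici 1) := by
      refine monotoneOn_of_deriv_nonneg (convex_Ici 1)
        (fun y _ => (hderiv y).continuousAt.continuousWithinAt)
        (fun y _ => (hderiv y).differentiableAt.differentiableWithinAt) fun y hy => ?_
      rw [interior_Ici] at hy
      rw [(hderiv y).deriv]
      exact (ih hy.le).le
    exact (chebDeriv_one_pos hk.le).trans_le (hmono self_mem_Ici hx hx)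

lemma leadingCoeff_iterate_derivative_nonneg {p : ℝ[X]} (hp : 0 ≤ p.leadingCoeff) (j : ℕ) :
    0 ≤ (derivative^[j] p).leadingCoeff := by
  induction j with
  | zero => exact hp
  | succ j ih =>
    rw [Function.iterate_succ_apply', leadingCoeff_derivative]
    positivity

lemma leadingCoeff_iterate_derivative_T_nonneg (n j : ℕ) :
    0 ≤ (derivative^[j] (Chebyshev.T ℝ n)).leadingCoeff :=
  leadingCoeff_iterate_derivative_nonneg (by rw [Chebyshev.leadingCoeff_T]; positivity) j

lemma lt_one_of_isGreatest_zeros (hk : k ≤ n) (hw : IsGreatest {x | chebDeriv n k x = 0} w) :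
    w < 1 :=
  not_le.1 fun h => (chebDeriv_pos_of_one_le hk h).ne' hw.1

lemma chebDeriv_nonneg_of_isGreatest_zeros (hw : IsGreatest {x | chebDeriv n k x = 0} w) (j : ℕ) :
    0 ≤ chebDeriv n (j + k) w := by
  have h := iterDeriv_nonneg (splits_iterate_derivative (splits_T n) k)
    (leadingCoeff_iterate_derivative_T_nonneg n k) (fun r hr => hw.2 (isRoot_of_mem_roots hr)) j
  rwa [iterDeriv_iterate_derivative] at h

lemma taylor_two_le_chebDeriv_one (hk : k ≤ n) (hw : IsGreatest {x | chebDeriv n k x = 0} w) :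
    (1 - w) * chebDeriv n (k + 1) w + (1 - w) ^ 2 / 2 * chebDeriv n (k + 2) w
      ≤ chebDeriv n k 1 := by
  have h := taylor_two_le_iterDeriv_zero (splits_iterate_derivative (splits_T n) k)
    (leadingCoeff_iterate_derivative_T_nonneg n k) (fun r hr => hw.2 (isRoot_of_mem_roots hr))
    (lt_one_of_isGreatest_zeros hk hw).le
  simp only [iterDeriv_iterate_derivative, add_comm _ k, add_zero] at h
  have hzero : iterDeriv (Chebyshev.T ℝ n) k w = 0 := hw.1
  rwa [hzero, zero_add] at h

lemma neg_chebDeriv_mul_le (hk : k + 1 ≤ n) (hw0 : 0 ≤ w)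
    (hw : IsGreatest {x | chebDeriv n (k + 1) x = 0} w) :
    -chebDeriv n k w * ((2 * k + 1) * (2 + (2 * k + 5) * w))
      ≤ 2 * (1 + w) ^ 2 * chebDeriv n k 1 := by
  have hkn : (k : ℝ) + 1 ≤ n := by exact_mod_cast hk
  have hzero : chebDeriv n (k + 1) w = 0 := hw.1
  have hode := one_sub_sq_mul_chebDeriv n k w
  have hode' := one_sub_sq_mul_chebDeriv n (k + 1) w
  have htaylor := taylor_two_le_chebDeriv_one hk hw
  rw [hzero] at hode hode'
  simp only [add_assoc, Nat.reduceAdd] at hode hode' htaylor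
  push_cast at hode'
  refine le_of_mul_le_mul_left ?_ (show 0 < (n : ℝ) ^ 2 - k ^ 2 by nlinarith)
  have hscaled := mul_le_mul_of_nonneg_left htaylor
    (show 0 ≤ 2 * (1 + w) ^ 2 * (2 * k + 1) by positivity)
  linear_combination hscaled + 2 * (1 + w) ^ 2 * chebDeriv_add_one_one n k
    - (2 * k + 1) * (2 + (2 * k + 5) * w) * hode - (2 * k + 1) * (1 - w ^ 2) * hode'

lemma chebDeriv_add_two_pos (hk : k + 2 ≤ n) (hw0 : 0 ≤ w)
    (hw : IsGreatest {x | chebDeriv n (k + 1) x = 0} w) : 0 < chebDeriv n (k + 2) w := by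
  have hnonneg := chebDeriv_nonneg_of_isGreatest_zeros hw 1
  rw [show 1 + (k + 1) = k + 2 by omega] at hnonneg
  refine hnonneg.lt_of_ne' ((chebDeriv_ne_zero_or (by omega) ⟨by linarith, ?_⟩).resolve_left
    (not_not.2 hw.1))
  exact lt_one_of_isGreatest_zeros (by omega) hw

lemma one_sub_sq_mul_chebDeriv_add_three (hw : chebDeriv n (k + 1) w = 0) :
    (1 - w ^ 2) * chebDeriv n (k + 3) w = (2 * k + 3) * w * chebDeriv n (k + 2) w := by
  have hode := one_sub_sq_mul_chebDeriv n (k + 1) w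
  rw [hw] at hode
  push_cast at hode
  linear_combination hode

lemma one_sub_sq_sq_mul_chebDeriv_add_four (hw : chebDeriv n (k + 1) w = 0) :
    (1 - w ^ 2) ^ 2 * chebDeriv n (k + 4) w
      = ((2 * k + 5) * (2 * k + 3) * w ^ 2 - (1 - w ^ 2) * ((n : ℝ) ^ 2 - (k + 2) ^ 2))
        * chebDeriv n (k + 2) w := by
  have hode := one_sub_sq_mul_chebDeriv n (k + 2) w
  push_cast at hode
  linear_combination (1 - w ^ 2) * hode
    + (2 * k + 5) * w * one_sub_sq_mul_chebDeriv_add_three hw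

lemma one_sub_sq_cube_mul_chebDeriv_add_five (hw : chebDeriv n (k + 1) w = 0) :
    (1 - w ^ 2) ^ 3 * chebDeriv n (k + 5) w
      = (2 * k + 5) * ((2 * k + 7) * (2 * k + 3) * w ^ 2
        - (1 - w ^ 2) * (2 * (n : ℝ) ^ 2 - (2 * k ^ 2 + 10 * k + 11)))
        * (w * chebDeriv n (k + 2) w) := by
  have hode := one_sub_sq_mul_chebDeriv n (k + 3) w
  push_cast at hode
  linear_combination (1 - w ^ 2) ^ 2 * hode
    + (2 * k + 7) * w * one_sub_sq_sq_mul_chebDeriv_add_four hw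
    - ((n : ℝ) ^ 2 - (k + 3) ^ 2) * (1 - w ^ 2) * one_sub_sq_mul_chebDeriv_add_three hw

lemma pos_of_isGreatest_zeros (hk : k + 3 ≤ n) (hw0 : 0 ≤ w)
    (hw : IsGreatest {x | chebDeriv n (k + 1) x = 0} w) : 0 < w := by
  refine hw0.lt_of_ne' ?_
  rintro rfl
  have hkn : (k : ℝ) + 3 ≤ n := by exact_mod_cast hk
  have hnonneg := chebDeriv_nonneg_of_isGreatest_zeros hw 3
  rw [show 3 + (k + 1) = k + 4 by omega] at hnonneg
  have hfour := one_sub_sq_sq_mul_chebDeriv_add_four hw.1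
  have hpos := mul_pos (show 0 < (n : ℝ) ^ 2 - (k + 2) ^ 2 by nlinarith)
    (chebDeriv_add_two_pos (by omega) le_rfl hw)
  linarith

lemma eq_zero_of_isGreatest_zeros (hw0 : 0 ≤ w)
    (hw : IsGreatest {x | chebDeriv (k + 2 : ℕ) (k + 1) x = 0} w) : w = 0 := by
  have hthree := one_sub_sq_mul_chebDeriv_add_three hw.1
  have hzero : chebDeriv (k + 2 : ℕ) (k + 3) w = 0 :=
    iterDeriv_eq_zero (by rw [Chebyshev.natDegree_T, Int.natAbs_natCast]; omega) w
  have hpos := chebDeriv_add_two_pos le_rfl hw0 hw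
  rw [hzero, mul_zero, eq_comm, mul_assoc, mul_eq_zero, mul_eq_zero] at hthree
  rcases hthree with h | h | h
  · linarith [(show 0 < 2 * (k : ℝ) + 3 by positivity)]
  · exact h
  · exact (hpos.ne' h).elim

-- This is `0 ≤ T_n^{(k+5)}(w)`, rewritten with the differential equation.
lemma one_sub_sq_mul_le_of_isGreatest_zeros (hk : k + 3 ≤ n) (hw0 : 0 ≤ w)
    (hw : IsGreatest {x | chebDeriv n (k + 1) x = 0} w) :
    (1 - w ^ 2) * (2 * (n : ℝ) ^ 2 - (2 * k ^ 2 + 10 * k + 11))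
      ≤ (2 * k + 7) * (2 * k + 3) * w ^ 2 := by
  have hwpos := pos_of_isGreatest_zeros hk hw0 hw
  have htwo := chebDeriv_add_two_pos (by omega) hw0 hw
  have hw1 := lt_one_of_isGreatest_zeros (by omega) hw
  have hnonneg := chebDeriv_nonneg_of_isGreatest_zeros hw 4
  rw [show 4 + (k + 1) = k + 5 by omega] at hnonneg
  have hprod := mul_nonneg (pow_nonneg (show 0 ≤ 1 - w ^ 2 by nlinarith) 3) hnonneg
  rw [one_sub_sq_cube_mul_chebDeriv_add_five hw.1, mul_assoc] at hprod
  exact sub_nonneg.1 (nonneg_of_mul_nonneg_left (nonneg_of_mul_nonneg_right hprod (by positivity))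
    (by positivity))

-- This is Laguerre's inequality for `T_n^{(k+1)} / (X - w)`, rewritten with the differential
-- equation.
lemma mul_sq_le_of_isGreatest_zeros (hk : k + 2 ≤ n) (hw0 : 0 ≤ w)
    (hw : IsGreatest {x | chebDeriv n (k + 1) x = 0} w) :
    (2 * k + 3) * (2 * k + 11) * w ^ 2 ≤ 4 * (1 - w ^ 2) * ((n : ℝ) ^ 2 - (k + 2) ^ 2) := by
  have hlaguerre := laguerre_inequality_of_isRoot
    (splits_iterate_derivative (splits_T n) (k + 1)) (w := w) hw.1
  simp only [iterDeriv_iterate_derivative] at hlaguerre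
  have hthree := one_sub_sq_mul_chebDeriv_add_three hw.1
  have hfour := one_sub_sq_sq_mul_chebDeriv_add_four hw.1
  have htwo := chebDeriv_add_two_pos hk hw0 hw
  rw [show 1 + (k + 1) = k + 2 by omega, show 2 + (k + 1) = k + 3 by omega,
    show 3 + (k + 1) = k + 4 by omega] at hlaguerre
  change 4 * chebDeriv n (k + 2) w * chebDeriv n (k + 4) w ≤ 3 * chebDeriv n (k + 3) w ^ 2
    at hlaguerre
  refine le_of_mul_le_mul_left ?_ (pow_pos htwo 2)
  linear_combination (1 - w ^ 2) ^ 2 * hlaguerre - 4 * chebDeriv n (k + 2) w * hfour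
    + 3 * ((1 - w ^ 2) * chebDeriv n (k + 3) w + (2 * k + 3) * w * chebDeriv n (k + 2) w) * hthree

end LargestZero

/-! ### Comparison of `T_N` with `T_{N+1}` -/

section Comparison

variable {N k : ℕ} {w x : ℝ}

lemma add_one_mul_derivative_T (N : ℕ) :
    C ((N : ℝ) + 1) * derivative (Chebyshev.T ℝ N)
      = C (N : ℝ) * ((X - C 0) * derivative (Chebyshev.T ℝ (N + 1 : ℕ))
        - C ((N : ℝ) + 1) * Chebyshev.T ℝ (N + 1 : ℕ)) := by
  have hU := Chebyshev.T_eq_X_mul_U_sub_U ℝ ((N : ℤ) - 1)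
  rw [show (N : ℤ) - 1 + 2 = N + 1 by ring, show (N : ℤ) - 1 + 1 = N by ring] at hU
  rw [Chebyshev.T_derivative_eq_U, Chebyshev.T_derivative_eq_U]
  push_cast
  rw [add_sub_cancel_right, hU, C_0, C_add, C_1, ← C_eq_natCast, map_natCast]
  ring

lemma add_one_mul_chebDeriv_add_one (N j : ℕ) (x : ℝ) :
    ((N : ℝ) + 1) * chebDeriv N (j + 1) x
      = N * (x * chebDeriv (N + 1 : ℕ) (j + 1) x - (N + 1 - j) * chebDeriv (N + 1 : ℕ) j x) := by
  have h := congrArg (fun p => iterDeriv p j x) (add_one_mul_derivative_T N)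
  simp only [iterDeriv_C_mul, iterDeriv_sub, iterDeriv_X_sub_C_mul, iterDeriv_derivative] at h
  change (N + 1) * chebDeriv N (j + 1) x = N * ((x - 0) * chebDeriv (N + 1 : ℕ) (j + 1) x
    + j * chebDeriv (N + 1 : ℕ) (j - 1 + 1) x - (N + 1) * chebDeriv (N + 1 : ℕ) j x) at h
  rcases j with _ | j
  · simpa using h
  · rw [Nat.add_sub_cancel] at h
    push_cast at h ⊢
    linear_combination h

-- Applies at `x = 1` and at the zeros of `T_{N+1}^{(k+1)}`.
lemma mul_chebDeriv_of_one_sub_sq_mul_eq_zero (hk : 1 ≤ k) (hkN : k ≤ N)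
    (hx : (1 - x ^ 2) * chebDeriv (N + 1 : ℕ) (k + 1) x = 0) :
    (N + 1) * (N + k) * chebDeriv N k x
      = N * (N + 1 - k) * (x * chebDeriv (N + 1 : ℕ) k x) := by
  have hkN' : (k : ℝ) ≤ N := by exact_mod_cast hkN
  have hode := one_sub_sq_mul_chebDeriv_add_one (N + 1) hk x
  rw [hx] at hode
  obtain ⟨j, rfl⟩ := Nat.exists_eq_add_of_le' hk
  have hcomp := add_one_mul_chebDeriv_add_one N j x
  rw [Nat.add_sub_cancel] at hode
  push_cast at hcomp hode hkN' ⊢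
  refine mul_left_cancel₀ (show (N : ℝ) + 1 - j ≠ 0 by linarith) ?_
  linear_combination ((N : ℝ) + 1 - j) * (N + (j + 1)) * hcomp - (N : ℝ) * (N + 1 - j) * hode

lemma chebDeriv_eq_of_chebDeriv_add_one_eq_zero (hk : 1 ≤ k) (hkN : k ≤ N)
    (hw : chebDeriv (N + 1 : ℕ) (k + 1) w = 0) {r : ℝ}
    (hr : chebDeriv (N + 1 : ℕ) k w = -r * chebDeriv (N + 1 : ℕ) k 1) :
    chebDeriv N k w = -(w * r * chebDeriv N k 1)
      ∧ chebDeriv N (k + 1) w = r * chebDeriv N k 1 * (N + k) := by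
  have hone := mul_chebDeriv_of_one_sub_sq_mul_eq_zero (x := 1) hk hkN (by ring)
  have hzero := mul_chebDeriv_of_one_sub_sq_mul_eq_zero hk hkN (by rw [hw, mul_zero])
  have hnext := add_one_mul_chebDeriv_add_one N k w
  rw [hw] at hnext
  rw [hr] at hzero hnext
  constructor
  · refine mul_left_cancel₀ (show ((N : ℝ) + 1) * (N + k) ≠ 0 by positivity) ?_
    linear_combination hzero + w * r * hone
  · refine mul_left_cancel₀ (show (N : ℝ) + 1 ≠ 0 by positivity) ?_
    linear_combination hnext - r * hone

end Comparison

/-! ### Estimates for the two quadratic forms -/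

section QuadraticForms

variable {N k x w y A b : ℝ}

lemma quadratic_form_nonneg {p q s a b : ℝ} (hp : 0 < p) (hdisc : q ^ 2 ≤ 4 * p * s) :
    0 ≤ p * a ^ 2 + q * a * b + s * b ^ 2 := by
  refine (mul_nonneg_iff_of_pos_left (show 0 < 4 * p by positivity)).1 ?_
  have hsum := add_nonneg (sq_nonneg (2 * p * a + q * b))
    (mul_nonneg (sub_nonneg.2 hdisc) (sq_nonneg b))
  linear_combination hsum

lemma mul_sq_le_mul_one_sub_sq (hk : 2 ≤ k) (hkN : k + 2 ≤ N) (hx1 : 0 ≤ 1 - x ^ 2)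
    (hx : (2 * k + 3) * (2 * k + 11) * x ^ 2 ≤ 4 * (1 - x ^ 2) * ((N + 1) ^ 2 - (k + 2) ^ 2)) :
    k ^ 2 * x ^ 2 ≤ (N ^ 2 - k ^ 2) * (1 - x ^ 2) := by
  refine le_of_mul_le_mul_left ?_ (show 0 < (2 * k + 3) * (2 * k + 11) by positivity)
  have hcoeff : 4 * k ^ 2 * ((N + 1) ^ 2 - (k + 2) ^ 2)
      ≤ (2 * k + 3) * (2 * k + 11) * (N ^ 2 - k ^ 2) := by
    obtain ⟨a, rfl⟩ : ∃ a, k = a + 2 := ⟨k - 2, by ring⟩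
    obtain ⟨t, rfl⟩ : ∃ t, N = a + t + 4 := ⟨N - a - 4, by ring⟩
    have ha : 0 ≤ a := by linarith
    have ht : 0 ≤ t := by linarith
    rw [← sub_nonneg]
    ring_nf
    positivity
  linear_combination k ^ 2 * hx + mul_le_mul_of_nonneg_left hcoeff hx1

lemma freeForm_nonneg (hc : 0 < N ^ 2 - k ^ 2)
    (hx : k ^ 2 * x ^ 2 ≤ (N ^ 2 - k ^ 2) * (1 - x ^ 2)) : 0 ≤ freeForm N k x A b := by
  have h := quadratic_form_nonneg (a := A) (b := b) (q := -2 * k * x) hc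
    (s := 1 - x ^ 2) (by linear_combination 4 * hx)
  unfold freeForm
  linear_combination h

lemma discriminant_le (hk : 2 ≤ k) (hkN : k + 2 ≤ N) :
    (2 * k * (31 / 30 * (k + 1) * N * (N + k - 1)) - (N ^ 2 - (k - 1) ^ 2)
        - (2 * k - 1) * (k + 1) * (N ^ 2 + k - 1)) ^ 2 * ((N + 1) ^ 2 - (k + 2) ^ 2)
      ≤ (31 / 30 * (k + 1) * N * (N + k - 1) * (N ^ 2 - k ^ 2)
          - k * (N ^ 2 + k) * (N ^ 2 - (k - 1) ^ 2))
        * (31 / 30 * (k + 1) * N * (N + k - 1) - (k + 1) * (N ^ 2 + k - 1))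
        * ((2 * k + 3) * (2 * k + 11)) := by
  obtain ⟨a, rfl⟩ : ∃ a, k = a + 2 := ⟨k - 2, by ring⟩
  obtain ⟨t, rfl⟩ : ∃ t, N = a + t + 4 := ⟨N - a - 4, by ring⟩
  have ha : 0 ≤ a := by linarith
  have ht : 0 ≤ t := by linarith
  rw [← sub_nonneg]
  ring_nf
  positivity

lemma leading_coefficient_pos (hk : 2 ≤ k) (hkN : k + 2 ≤ N) :
    0 < 31 / 30 * (k + 1) * N * (N + k - 1) * (N ^ 2 - k ^ 2)
      - k * (N ^ 2 + k) * (N ^ 2 - (k - 1) ^ 2) := by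
  obtain ⟨a, rfl⟩ : ∃ a, k = a + 2 := ⟨k - 2, by ring⟩
  obtain ⟨t, rfl⟩ : ∃ t, N = a + t + 4 := ⟨N - a - 4, by ring⟩
  have ha : 0 ≤ a := by linarith
  have ht : 0 ≤ t := by linarith
  ring_nf
  positivity

lemma sigmaForm_le (hk : 2 ≤ k) (hkN : k + 2 ≤ N) (hx1 : 0 ≤ 1 - x ^ 2)
    (hx : (2 * k + 3) * (2 * k + 11) * x ^ 2 ≤ 4 * (1 - x ^ 2) * ((N + 1) ^ 2 - (k + 2) ^ 2)) :
    sigmaForm N k x A b ≤ 31 / 30 * ((k + 1) * N / (N - k + 1)) * freeForm N k x A b := by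
  have hlow : 0 < N - k + 1 := by linarith
  have hhigh : 0 < N + k - 1 := by linarith
  have hC : N ^ 2 - (k - 1) ^ 2 = (N - k + 1) * (N + k - 1) := by ring
  have hdisc := discriminant_le hk hkN
  set p := 31 / 30 * (k + 1) * N * (N + k - 1) * (N ^ 2 - k ^ 2)
    - k * (N ^ 2 + k) * (N ^ 2 - (k - 1) ^ 2) with hp
  set q := 2 * k * (31 / 30 * (k + 1) * N * (N + k - 1)) - (N ^ 2 - (k - 1) ^ 2)
    - (2 * k - 1) * (k + 1) * (N ^ 2 + k - 1) with hq
  set s := 31 / 30 * (k + 1) * N * (N + k - 1) - (k + 1) * (N ^ 2 + k - 1) with hs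
  have hdisc' : (-(q * x)) ^ 2 ≤ 4 * p * (s * (1 - x ^ 2)) := by
    refine le_of_mul_le_mul_left ?_ (show 0 < (2 * k + 3) * (2 * k + 11) by positivity)
    linear_combination q ^ 2 * hx + mul_le_mul_of_nonneg_left hdisc hx1 * 4
  have hform := quadratic_form_nonneg (leading_coefficient_pos hk hkN) hdisc' (a := A) (b := b)
  have hsplit : 31 / 30 * ((k + 1) * N / (N - k + 1)) * freeForm N k x A b
      - sigmaForm N k x A b
      = (p * A ^ 2 + -(q * x) * A * b + s * (1 - x ^ 2) * b ^ 2) / (N ^ 2 - (k - 1) ^ 2) := by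
    rw [freeForm, sigmaForm, hp, hq, hs, hC]
    field_simp
    ring
  rw [← sub_nonneg, hsplit, hC]
  positivity

-- One of the two factors `freeForm` is estimated by `m ^ 2`, the other one by `E`.
lemma freeForm_sq_le {m E : ℝ} (hk : 0 ≤ k) (hkN : k < N) (hx1 : 0 < 1 - x ^ 2)
    (hx : k ^ 2 * x ^ 2 ≤ (N ^ 2 - k ^ 2) * (1 - x ^ 2))
    (hfirst : ((k + 1) * b) ^ 2 ≤ m ^ 2)
    (hsecond : ((N ^ 2 - k ^ 2) * A - k * x * b) ^ 2 ≤ m ^ 2)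
    (henergy : (1 - x ^ 2) * freeForm N k x A b ≤ E) :
    freeForm N k x A b ^ 2
      ≤ m ^ 2 * (E * (1 / (k + 1) ^ 2 + 1 / ((N ^ 2 - k ^ 2) * (1 - x ^ 2)))) := by
  have hc : 0 < N ^ 2 - k ^ 2 := by nlinarith
  have hnonneg : 0 ≤ freeForm N k x A b := freeForm_nonneg hc hx
  have hle : freeForm N k x A b
      ≤ m ^ 2 * ((1 - x ^ 2) * (1 / (k + 1) ^ 2 + 1 / ((N ^ 2 - k ^ 2) * (1 - x ^ 2)))) :=
    calc
      freeForm N k x A b = (1 - x ^ 2) * ((k + 1) * b) ^ 2 / (k + 1) ^ 2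
          + ((N ^ 2 - k ^ 2) * A - k * x * b) ^ 2 / (N ^ 2 - k ^ 2)
          - k ^ 2 * x ^ 2 * b ^ 2 / (N ^ 2 - k ^ 2) := by
        unfold freeForm
        field_simp
        ring
      _ ≤ (1 - x ^ 2) * m ^ 2 / (k + 1) ^ 2 + m ^ 2 / (N ^ 2 - k ^ 2) - 0 := by
        gcongr
        positivity
      _ = _ := by
        field_simp
        ring
  calc
    freeForm N k x A b ^ 2
      ≤ m ^ 2 * ((1 - x ^ 2) * (1 / (k + 1) ^ 2 + 1 / ((N ^ 2 - k ^ 2) * (1 - x ^ 2))))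
        * freeForm N k x A b := by
      rw [sq]
      exact mul_le_mul_of_nonneg_right hle hnonneg
    _ = m ^ 2 * ((1 - x ^ 2) * freeForm N k x A b
        * (1 / (k + 1) ^ 2 + 1 / ((N ^ 2 - k ^ 2) * (1 - x ^ 2)))) := by ring
    _ ≤ _ := by gcongr

end QuadraticForms

/-! ### Numerical estimates at the largest zero -/

section Numerical

variable {N k w : ℝ}

lemma rational_part_le (hk : 2 ≤ k) (hkN : k + 2 ≤ N) :
    (2 * k + 7) * (2 * k + 3) / (2 * ((N + 1) ^ 2 + k ^ 2 + 5 * k + 5)) * (N + k) ^ 2 / (k + 1) ^ 2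
      + (N + k) / (N - k) ≤ k + 5 - 2 / (k + 2) := by
  obtain ⟨a, rfl⟩ : ∃ a, k = a + 2 := ⟨k - 2, by ring⟩
  obtain ⟨t, rfl⟩ : ∃ t, N = a + t + 4 := ⟨N - a - 4, by ring⟩
  have ha : 0 ≤ a := by linarith
  have ht : 0 ≤ t := by linarith
  rw [← sub_nonneg]
  have hne : a + t + 4 - (a + 2) = t + 2 := by ring
  rw [hne]
  field_simp
  ring_nf
  positivity

lemma energy_mul_le (hk : 2 ≤ k) (hkN : k + 2 ≤ N) (hw1 : 0 < 1 - w ^ 2)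
    (hupper : (1 - w ^ 2) * (2 * (N + 1) ^ 2 - (2 * k ^ 2 + 10 * k + 11))
      ≤ (2 * k + 7) * (2 * k + 3) * w ^ 2)
    (hlower : (2 * k + 3) * (2 * k + 11) * w ^ 2
      ≤ 4 * (1 - w ^ 2) * ((N + 1) ^ 2 - (k + 2) ^ 2)) :
    ((1 - w ^ 2) * (N + k) ^ 2 + k * w ^ 2)
      * (1 / (k + 1) ^ 2 + 1 / ((N ^ 2 - k ^ 2) * (1 - w ^ 2))) ≤ k + 5 := by
  have hsub : 0 < N - k := by linarith
  have hadd : 0 < N + k := by linarith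
  have hc : N ^ 2 - k ^ 2 = (N - k) * (N + k) := by ring
  have hy : 1 - w ^ 2
      ≤ (2 * k + 7) * (2 * k + 3) / (2 * ((N + 1) ^ 2 + k ^ 2 + 5 * k + 5)) := by
    rw [le_div_iff₀ (by positivity)]
    linear_combination hupper
  have hratio : w ^ 2 / ((N ^ 2 - k ^ 2) * (1 - w ^ 2))
      ≤ 4 * (k + 2) / ((2 * k + 3) * (2 * k + 11) * (k + 1)) := by
    have hQ : ((N + 1) ^ 2 - (k + 2) ^ 2) * (k + 1) ≤ (N ^ 2 - k ^ 2) * (k + 2) := by nlinarith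
    rw [div_le_div_iff₀ (by rw [hc]; positivity) (by positivity)]
    linear_combination (k + 1) * hlower + mul_le_mul_of_nonneg_left hQ hw1.le * 4
  have hsmall : k / (k + 1) ^ 2 + k * (4 * (k + 2) / ((2 * k + 3) * (2 * k + 11) * (k + 1)))
      ≤ 2 / (k + 2) := by
    rw [← sub_nonneg]
    field_simp
    ring_nf
    positivity
  calc ((1 - w ^ 2) * (N + k) ^ 2 + k * w ^ 2)
        * (1 / (k + 1) ^ 2 + 1 / ((N ^ 2 - k ^ 2) * (1 - w ^ 2)))
      = ((1 - w ^ 2) * (N + k) ^ 2 / (k + 1) ^ 2 + (N + k) / (N - k))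
        + (k * w ^ 2 / (k + 1) ^ 2 + k * (w ^ 2 / ((N ^ 2 - k ^ 2) * (1 - w ^ 2)))) := by
        rw [hc]
        field_simp
    _ ≤ ((2 * k + 7) * (2 * k + 3) / (2 * ((N + 1) ^ 2 + k ^ 2 + 5 * k + 5)) * (N + k) ^ 2
          / (k + 1) ^ 2 + (N + k) / (N - k))
        + (k * 1 / (k + 1) ^ 2
          + k * (4 * (k + 2) / ((2 * k + 3) * (2 * k + 11) * (k + 1)))) := by
        gcongr
        linarith
    _ ≤ k + 5 := by
        rw [mul_one]
        linarith [rational_part_le hk hkN]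

end Numerical

lemma mul_sqrt_le {k w : ℝ} (hk : 2 ≤ k) (hw0 : 0 ≤ w) (hw1 : w ≤ 1)
    (hw : 1 ≤ (2 * k + 4) * w ^ 2) :
    31 / 30 * √(k + 5) * (1 + w) ^ 2 ≤ 2 + (2 * k + 5) * w := by
  set a := 31 / 30 * √(k + 5) with ha
  have ha0 : 0 ≤ a := by positivity
  have ha2 : a ^ 2 = 961 / 900 * (k + 5) := by
    rw [ha, mul_pow, Real.sq_sqrt (by linarith)]
    norm_num
  set q := √(2 * k + 4)
  have hq2 : q ^ 2 = 2 * k + 4 := Real.sq_sqrt (by linarith)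
  have hq1 : 1 < q := Real.lt_sqrt_of_sq_lt (by linarith)
  have haq : a ≤ q := abs_le_of_sq_le_sq' (by rw [ha2, hq2]; linarith) (by linarith) |>.2
  have ha1 : 0 ≤ 2 * k + 7 - 4 * a := by
    have : a ≤ (2 * k + 7) / 4 :=
      abs_le_of_sq_le_sq' (by rw [ha2]; nlinarith) (by linarith) |>.2
    linarith
  have hqw : 1 ≤ q * w := by
    have : 1 ^ 2 ≤ (q * w) ^ 2 := by rwa [one_pow, mul_pow, hq2]
    exact abs_le_of_sq_le_sq' this (by positivity) |>.2
  have hqinv : q * q⁻¹ = 1 := mul_inv_cancel₀ (by positivity)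
  have hp1 : 0 < 1 - q⁻¹ := by
    have := inv_lt_one_of_one_lt₀ hq1
    linarith
  have hwp : 0 ≤ w - q⁻¹ := sub_nonneg.2 ((inv_le_iff_one_le_mul₀' (by positivity)).2 hqw)
  -- The difference of the two sides is concave in `w`, and nonnegative at `q⁻¹` and at `1`.
  have hp : 0 ≤ 2 + (q ^ 2 + 1) * q⁻¹ - a * (1 + q⁻¹) ^ 2 := by
    linear_combination mul_le_mul_of_nonneg_right haq (sq_nonneg (1 + q⁻¹))
      + (2 + q⁻¹ - q) * hqinv
  rw [← sub_nonneg, ← mul_nonneg_iff_of_pos_left hp1]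
  linear_combination mul_nonneg (sub_nonneg.2 hw1) hp + mul_nonneg hwp ha1
    + mul_nonneg (mul_nonneg ha0 hwp) (mul_nonneg (sub_nonneg.2 hw1) hp1.le)
    + q⁻¹ * (1 - w) * hq2

/-! ### Interior critical points -/

section CriticalPoint

variable {N k : ℕ} {x w : ℝ}

lemma hasDerivAt_energy (N k : ℕ) (x : ℝ) :
    HasDerivAt
      (fun t => (1 - t ^ 2) * freeForm N k t (chebDeriv N k t) (chebDeriv N (k + 1) t)
        + k * chebDeriv N k t ^ 2)
      (2 * (k - 1) * x * freeForm N k x (chebDeriv N k x) (chebDeriv N (k + 1) x)) x := by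
  have hA : HasDerivAt (chebDeriv N k) (chebDeriv N (k + 1) x) x := hasDerivAt_iterDeriv _ k x
  have hB : HasDerivAt (chebDeriv N (k + 1)) (chebDeriv N (k + 2) x) x :=
    hasDerivAt_iterDeriv _ (k + 1) x
  have hX := hasDerivAt_id x
  have hY := (hX.pow 2).const_sub 1
  unfold freeForm
  refine ((hY.mul (((hY.mul (hB.pow 2)).add ((hA.pow 2).const_mul ((N : ℝ) ^ 2 - k ^ 2))).sub
    (((hX.const_mul (2 * (k : ℝ))).mul hA).mul hB))).add
    ((hA.pow 2).const_mul (k : ℝ))).congr_deriv ?_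
  simp only [id, Pi.pow_apply, Pi.mul_apply, Pi.add_apply, Pi.sub_apply]
  push_cast
  linear_combination (2 * (1 - x ^ 2) * chebDeriv N (k + 1) x - 2 * k * x * chebDeriv N k x)
    * one_sub_sq_mul_chebDeriv N k x

lemma energy_le_of_le (hk : 1 ≤ k) (hkN : k < N) (hx0 : 0 ≤ x) (hxw : x ≤ w)
    (hw : (k : ℝ) ^ 2 * w ^ 2 ≤ ((N : ℝ) ^ 2 - k ^ 2) * (1 - w ^ 2)) :
    (1 - x ^ 2) * freeForm N k x (chebDeriv N k x) (chebDeriv N (k + 1) x)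
        + k * chebDeriv N k x ^ 2
      ≤ (1 - w ^ 2) * freeForm N k w (chebDeriv N k w) (chebDeriv N (k + 1) w)
        + k * chebDeriv N k w ^ 2 := by
  have hk' : (1 : ℝ) ≤ k := by exact_mod_cast hk
  have hc : (0 : ℝ) < (N : ℝ) ^ 2 - k ^ 2 := by
    have : (k : ℝ) < N := by exact_mod_cast hkN
    nlinarith
  refine monotoneOn_of_deriv_nonneg (convex_Icc 0 w)
    (fun t _ => (hasDerivAt_energy N k t).continuousAt.continuousWithinAt)
    (fun t _ => (hasDerivAt_energy N k t).differentiableAt.differentiableWithinAt)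
    (fun t ht => ?_) ⟨hx0, hxw⟩ ⟨hx0.trans hxw, le_rfl⟩ hxw
  rw [interior_Icc] at ht
  have htw : t ^ 2 ≤ w ^ 2 := pow_le_pow_left₀ ht.1.le ht.2.le 2
  have hform := freeForm_nonneg (A := chebDeriv N k t) (b := chebDeriv N (k + 1) t) hc
    (x := t) (by nlinarith)
  rw [(hasDerivAt_energy N k t).deriv]
  exact mul_nonneg (mul_nonneg (by linarith) ht.1.le) hform

lemma energy_eq_of_chebDeriv_add_one_eq_zero (hk : 1 ≤ k) (hkN : k ≤ N)
    (hw : chebDeriv (N + 1 : ℕ) (k + 1) w = 0) {r : ℝ}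
    (hr : chebDeriv (N + 1 : ℕ) k w = -r * chebDeriv (N + 1 : ℕ) k 1) :
    (1 - w ^ 2) * freeForm N k w (chebDeriv N k w) (chebDeriv N (k + 1) w)
        + k * chebDeriv N k w ^ 2
      = (r * chebDeriv N k 1) ^ 2 * ((1 - w ^ 2) * (N + k) ^ 2 + k * w ^ 2) := by
  obtain ⟨hA, hB⟩ := chebDeriv_eq_of_chebDeriv_add_one_eq_zero hk hkN hw hr
  rw [hA, hB, freeForm]
  ring

lemma exists_chebDeriv_eq_neg_mul {n : ℕ} (hkn : k + 1 ≤ n) (hw0 : 0 ≤ w)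
    (hw : IsGreatest {x | chebDeriv n (k + 1) x = 0} w) :
    ∃ r : ℝ, 0 ≤ r ∧ chebDeriv n k w = -r * chebDeriv n k 1
      ∧ r * ((2 * k + 1) * (2 + (2 * k + 5) * w)) ≤ 2 * (1 + w) ^ 2 := by
  have hone : 0 < chebDeriv n k 1 := chebDeriv_one_pos (by omega)
  have hle := neg_chebDeriv_mul_le hkn hw0 hw
  refine ⟨-chebDeriv n k w / chebDeriv n k 1, ?_, by field_simp, ?_⟩
  · have hc : (0 : ℝ) < (n : ℝ) ^ 2 - k ^ 2 := by
      have : (k : ℝ) + 1 ≤ n := by exact_mod_cast hkn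
      nlinarith
    have hy : 0 < 1 - w ^ 2 := by nlinarith [lt_one_of_isGreatest_zeros hkn hw]
    have hzero : chebDeriv n (k + 1) w = 0 := hw.1
    have hode := one_sub_sq_mul_chebDeriv n k w
    rw [hzero] at hode
    have hnext := chebDeriv_nonneg_of_isGreatest_zeros hw 1
    rw [show 1 + (k + 1) = k + 2 by ring] at hnext
    refine div_nonneg ((mul_nonneg_iff_of_pos_left hc).1 ?_) hone.le
    linear_combination mul_nonneg hy.le hnext + hode
  · rw [div_mul_eq_mul_div, div_le_iff₀ hone]
    exact hle

lemma freeForm_le_mul_sqrt (hk : 2 ≤ k) (hkN : k + 2 ≤ N) (hx0 : 0 ≤ x) (hxw : x ≤ w)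
    (hw : IsGreatest {x | chebDeriv (N + 1 : ℕ) (k + 1) x = 0} w) {r m : ℝ} (hr0 : 0 ≤ r)
    (hr : chebDeriv (N + 1 : ℕ) k w = -r * chebDeriv (N + 1 : ℕ) k 1)
    (hfirst : |(k + 1) * chebDeriv N (k + 1) x| ≤ m)
    (hsecond : |((N : ℝ) ^ 2 - k ^ 2) * chebDeriv N k x - k * x * chebDeriv N (k + 1) x| ≤ m) :
    freeForm N k x (chebDeriv N k x) (chebDeriv N (k + 1) x)
      ≤ m * (r * chebDeriv N k 1 * √(k + 5)) := by
  have hk' : (2 : ℝ) ≤ k := by exact_mod_cast hk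
  have hkN' : (k : ℝ) + 2 ≤ N := by exact_mod_cast hkN
  have hw0 : 0 ≤ w := hx0.trans hxw
  have hM : 0 < chebDeriv N k 1 := chebDeriv_one_pos (by omega)
  have hw1 : 0 < 1 - w ^ 2 := by nlinarith [lt_one_of_isGreatest_zeros (by omega) hw]
  have hxw2 : x ^ 2 ≤ w ^ 2 := pow_le_pow_left₀ hx0 hxw 2
  have hc : (0 : ℝ) < (N : ℝ) ^ 2 - k ^ 2 := by nlinarith
  have hupper := one_sub_sq_mul_le_of_isGreatest_zeros (by omega) hw0 hw
  have hlower := mul_sq_le_of_isGreatest_zeros (by omega) hw0 hw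
  rw [Nat.cast_add_one] at hupper hlower
  have hstable := mul_sq_le_mul_one_sub_sq hk' hkN' hw1.le hlower
  set E := (r * chebDeriv N k 1) ^ 2 * ((1 - w ^ 2) * (N + k) ^ 2 + k * w ^ 2) with hE
  have henergy : (1 - x ^ 2) * freeForm N k x (chebDeriv N k x) (chebDeriv N (k + 1) x) ≤ E := by
    have hmono := energy_le_of_le (by omega) (by omega) hx0 hxw hstable
    rw [energy_eq_of_chebDeriv_add_one_eq_zero (by omega) (by omega) hw.1 hr] at hmono
    exact (le_add_of_nonneg_right (by positivity)).trans hmono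
  have hm0 : 0 ≤ m := (abs_nonneg _).trans hfirst
  refine abs_le_of_sq_le_sq' ?_ (by positivity) |>.2
  calc freeForm N k x (chebDeriv N k x) (chebDeriv N (k + 1) x) ^ 2
      ≤ m ^ 2 * (E * (1 / (k + 1) ^ 2 + 1 / (((N : ℝ) ^ 2 - k ^ 2) * (1 - x ^ 2)))) :=
        freeForm_sq_le (by linarith) (by linarith) (by linarith) (by nlinarith)
          (sq_le_sq' (abs_le.1 hfirst).1 (abs_le.1 hfirst).2)
          (sq_le_sq' (abs_le.1 hsecond).1 (abs_le.1 hsecond).2) henergy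
    _ ≤ m ^ 2 * (E * (1 / (k + 1) ^ 2 + 1 / (((N : ℝ) ^ 2 - k ^ 2) * (1 - w ^ 2)))) := by
        gcongr
    _ = m ^ 2 * (r * chebDeriv N k 1) ^ 2 * (((1 - w ^ 2) * (N + k) ^ 2 + k * w ^ 2)
          * (1 / (k + 1) ^ 2 + 1 / (((N : ℝ) ^ 2 - k ^ 2) * (1 - w ^ 2)))) := by rw [hE]; ring
    _ ≤ m ^ 2 * (r * chebDeriv N k 1) ^ 2 * (k + 5) := by
        gcongr
        exact energy_mul_le hk' hkN' hw1 hupper hlower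
    _ = (m * (r * chebDeriv N k 1 * √(k + 5))) ^ 2 := by
        rw [mul_pow m, mul_pow _ √(k + 5 : ℝ), Real.sq_sqrt (by positivity), mul_assoc]

lemma sigmaForm_le_of_isGreatest_zeros {A b : ℝ} (hk : 2 ≤ k) (hkN : k + 2 ≤ N) (hx0 : 0 ≤ x)
    (hxw : x ≤ w) (hw : IsGreatest {x | chebDeriv (N + 1 : ℕ) (k + 1) x = 0} w) :
    sigmaForm N k x A b ≤ 31 / 30 * ((k + 1) * N / (N - k + 1)) * freeForm N k x A b := by
  have hk' : (2 : ℝ) ≤ k := by exact_mod_cast hk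
  have hkN' : (k : ℝ) + 2 ≤ N := by exact_mod_cast hkN
  have hw1 : 0 < 1 - w ^ 2 := by
    nlinarith [lt_one_of_isGreatest_zeros (by omega) hw, hx0.trans hxw]
  have hxw2 : x ^ 2 ≤ w ^ 2 := pow_le_pow_left₀ hx0 hxw 2
  have hlower := mul_sq_le_of_isGreatest_zeros (by omega) (hx0.trans hxw) hw
  rw [Nat.cast_add_one] at hlower
  refine sigmaForm_le hk' hkN' (by linarith) ?_
  have hnk : 0 ≤ ((N : ℝ) + 1) ^ 2 - (k + 2) ^ 2 := by nlinarith
  calc (2 * k + 3) * (2 * k + 11) * x ^ 2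
      ≤ (2 * k + 3) * (2 * k + 11) * w ^ 2 := by gcongr
    _ ≤ 4 * (1 - w ^ 2) * (((N : ℝ) + 1) ^ 2 - (k + 2) ^ 2) := hlower
    _ ≤ 4 * (1 - x ^ 2) * (((N : ℝ) + 1) ^ 2 - (k + 2) ^ 2) := by gcongr

lemma max_abs_chebDeriv_pos (hkN : k < N) (hx : x ∈ Ioo (-1 : ℝ) 1) :
    0 < max |(k + 1) * chebDeriv N (k + 1) x|
      |((N : ℝ) ^ 2 - k ^ 2) * chebDeriv N k x - k * x * chebDeriv N (k + 1) x| := by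
  rw [lt_max_iff, abs_pos, abs_pos]
  rcases eq_or_ne (chebDeriv N (k + 1) x) 0 with hb | hb
  · right
    have hA := (chebDeriv_ne_zero_or hkN.le hx).resolve_right (not_not.2 hb)
    have hc : (N : ℝ) ^ 2 - k ^ 2 ≠ 0 := by
      have : (k : ℝ) < N := by exact_mod_cast hkN
      nlinarith
    rw [hb, mul_zero, sub_zero]
    exact mul_ne_zero hc hA
  · exact .inl (mul_ne_zero (by positivity) hb)

lemma mul_sqrt_mul_le_of_isGreatest_zeros {n : ℕ} {r : ℝ} (hk : 2 ≤ k) (hkn : k + 3 ≤ n)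
    (hw0 : 0 ≤ w) (hw : IsGreatest {x | chebDeriv n (k + 1) x = 0} w) (hr0 : 0 ≤ r)
    (hr : r * ((2 * k + 1) * (2 + (2 * k + 5) * w)) ≤ 2 * (1 + w) ^ 2) :
    31 / 30 * √(k + 5) * r ≤ 2 / (2 * k + 1) := by
  have hkn' : (k : ℝ) + 3 ≤ n := by exact_mod_cast hkn
  have hw1 : w < 1 := lt_one_of_isGreatest_zeros (by omega) hw
  have hy : 0 ≤ 1 - w ^ 2 := by nlinarith
  have hlarge : 1 ≤ (2 * k + 4) * w ^ 2 := by
    refine le_of_mul_le_mul_left ?_ (show (0 : ℝ) < 2 * k + 7 by positivity)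
    have hnk : 2 * (k : ℝ) + 7 ≤ 2 * n ^ 2 - (2 * k ^ 2 + 10 * k + 11) := by nlinarith
    linear_combination mul_le_mul_of_nonneg_left hnk hy
      + one_sub_sq_mul_le_of_isGreatest_zeros hkn hw0 hw
  have hsqrt := mul_sqrt_le (by exact_mod_cast hk) hw0 hw1.le hlarge
  rw [le_div_iff₀ (by positivity)]
  refine le_of_mul_le_mul_right ?_ (show 0 < (1 + w) ^ 2 by positivity)
  linear_combination mul_le_mul_of_nonneg_left hsqrt
    (show 0 ≤ r * (2 * k + 1) by positivity) + hr

lemma IsBoundedChain.abs_le_of_eq_zero (hk : 2 ≤ k) (hkN : k + 2 ≤ N) (hx0 : 0 ≤ x) (hxw : x ≤ w)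
    (hw : IsGreatest {x | chebDeriv (N + 1 : ℕ) (k + 1) x = 0} w) {σ : ℝ} (hσ : 0 ≤ σ)
    {F : ℕ → ℝ → ℝ} (hF : IsBoundedChain (N + 1) σ F (-1) 1) (hz : F (k + 1) x = 0) :
    |F k x| ≤ 2 / (2 * k + 1) * chebDeriv N k 1
      * (30 / 31 + 2 / N * (σ / sigmaN (N + 1)) * ((k + 1) * N / (N - k + 1))) := by
  have hw1 : w < 1 := lt_one_of_isGreatest_zeros (by omega) hw
  have hx : x ∈ Ioo (-1 : ℝ) 1 := ⟨by linarith, by linarith⟩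
  have hM : 0 < chebDeriv N k 1 := chebDeriv_one_pos (by omega)
  obtain ⟨r, hr0, hr, hrle⟩ := exists_chebDeriv_eq_neg_mul (by omega) (hx0.trans hxw) hw
  have hform := freeForm_le_mul_sqrt hk hkN hx0 hxw hw hr0 hr (le_max_left _ _) (le_max_right _ _)
  have hσform : sigmaForm N k x (chebDeriv N k x) (chebDeriv N (k + 1) x) ≤ _ :=
    sigmaForm_le_of_isGreatest_zeros hk hkN hx0 hxw hw
  have hbound := hF.abs_mul_max_le (by omega) (by omega) hx hz
  have hm := max_abs_chebDeriv_pos (N := N) (k := k) (by omega) hx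
  set Θ := freeForm N k x (chebDeriv N k x) (chebDeriv N (k + 1) x)
  set m := max |(k + 1) * chebDeriv N (k + 1) x|
    |((N : ℝ) ^ 2 - k ^ 2) * chebDeriv N k x - k * x * chebDeriv N (k + 1) x|
  set θ : ℝ := (k + 1) * N / (N - k + 1)
  have hθ : 0 ≤ θ := by
    have : (k : ℝ) + 2 ≤ N := by exact_mod_cast hkN
    exact div_nonneg (by positivity) (by linarith)
  set τ := 2 / N * (σ / sigmaN (N + 1))
  have hτ : 0 ≤ τ := mul_nonneg (by positivity) (div_nonneg hσ (sigmaN_pos _).le)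
  have hrsqrt := mul_sqrt_mul_le_of_isGreatest_zeros hk (by omega) (hx0.trans hxw) hw hr0 hrle
  refine le_of_mul_le_mul_right ?_ hm
  calc |F k x| * m
      ≤ Θ + τ * (31 / 30 * θ * Θ) := by linarith [mul_le_mul_of_nonneg_left hσform hτ]
    _ = (1 + 31 / 30 * (τ * θ)) * Θ := by ring
    _ ≤ (1 + 31 / 30 * (τ * θ)) * (m * (r * chebDeriv N k 1 * √(k + 5))) := by gcongr
    _ = 31 / 30 * √(k + 5) * r * chebDeriv N k 1 * (30 / 31 + τ * θ) * m := by ring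
    _ ≤ 2 / (2 * k + 1) * chebDeriv N k 1 * (30 / 31 + τ * θ) * m := by gcongr

end CriticalPoint

/-! ### The bound on `[0, w]` -/

lemma memW.isBoundedChain {n : ℕ} {σ : ℝ} {f : ℝ → ℝ} (hf : memW n σ f) :
    IsBoundedChain n σ (fun i => iteratedDerivWithin i f (Icc (-1) 1)) (-1) 1 where
  isDerivChain i hi := by
    refine ⟨(hf.1 i hi).continuousOn, fun x hx => ?_⟩
    have h := (hf.1 i hi x (Ioo_subset_Icc_self hx)).hasDerivWithinAt
    rw [← iteratedDerivWithin_succ] at h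
    exact h.hasDerivAt (Icc_mem_nhds hx.1 hx.2)
  abs_zero_le := by simpa only [iteratedDerivWithin_zero] using hf.2.1
  abs_last_le := hf.2.2

lemma IsBoundedChain.comp_affine {n : ℕ} {σ a b a' b' s c : ℝ} {F : ℕ → ℝ → ℝ}
    (hF : IsBoundedChain n σ F a b) (hs0 : s ≠ 0) (hs1 : |s| ≤ 1)
    (hmaps : MapsTo (fun t => s * t + c) (Icc a' b') (Icc a b)) :
    IsBoundedChain n σ (fun i t => s ^ i * F i (s * t + c)) a' b' where
  isDerivChain i hi := by
    obtain ⟨hcont, hderiv⟩ := hF.isDerivChain i hi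
    have hmaps' : MapsTo (fun t => s * t + c) (Ioo a' b') (Ioo a b) := by
      have hopen : IsOpenMap fun t => s * t + c :=
        ((Homeomorph.mulLeft₀ s hs0).trans (Homeomorph.addRight c)).isOpenMap
      simpa only [interior_Icc] using hopen.mapsTo_interior hmaps
    refine ⟨continuousOn_const.mul (hcont.comp (by fun_prop) hmaps), fun x hx => ?_⟩
    have haffine : HasDerivAt (fun t => s * t + c) s x := by
      simpa using ((hasDerivAt_id x).const_mul s).add_const c
    refine (((hderiv _ (hmaps' hx)).comp x haffine).const_mul (s ^ i)).congr_deriv ?_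
    simp only [pow_succ]
    ring
  abs_zero_le x hx := by simpa using hF.abs_zero_le _ (hmaps hx)
  abs_last_le x hx := by
    rw [abs_mul, abs_pow]
    exact (mul_le_of_le_one_left (abs_nonneg _) (pow_le_one₀ (abs_nonneg s) hs1)).trans
      (hF.abs_last_le _ (hmaps hx))

lemma IsBoundedChain.comp_neg {n : ℕ} {σ b : ℝ} {F : ℕ → ℝ → ℝ}
    (hF : IsBoundedChain n σ F (-b) b) :
    IsBoundedChain n σ (fun i t => (-1) ^ i * F i (-t)) (-b) b := by
  have h := hF.comp_affine (s := -1) (c := 0) (a' := -b) (b' := b) (by norm_num) (by norm_num)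
    fun t ht => by simpa [neg_le, and_comm] using ht
  simpa only [neg_one_mul, add_zero] using h

lemma exists_abs_le_and_deriv_eq_zero {f f' : ℝ → ℝ} {a b x : ℝ} (hf : ContinuousOn f (Icc a b))
    (hf' : ∀ y ∈ Ioo a b, HasDerivAt f (f' y) y) (hx : x ∈ Icc a b) :
    ∃ y ∈ Icc a b, |f x| ≤ |f y| ∧ (y ∈ Ioo a b → f' y = 0) := by
  obtain ⟨y, hy, hmax⟩ := isCompact_Icc.exists_isMaxOn ⟨x, hx⟩ hf.abs
  rcases eq_or_ne (f y) 0 with h0 | h0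
  · refine ⟨a, left_mem_Icc.2 (hx.1.trans hx.2), ?_, fun h => absurd h.1 (lt_irrefl a)⟩
    have h : |f x| ≤ |f y| := hmax hx
    rw [h0, abs_zero] at h
    exact h.trans (abs_nonneg _)
  · refine ⟨y, hy, hmax hx, fun hy' => ?_⟩
    have hlocal : IsLocalMax (f ^ 2) y := by
      filter_upwards [Icc_mem_nhds hy'.1 hy'.2] with t ht using sq_le_sq.2 (hmax ht)
    simpa [h0] using hlocal.hasDerivAt_eq_zero ((hf' y hy').pow 2)

section Bound

variable {N k : ℕ} {x w σ : ℝ} {F : ℕ → ℝ → ℝ}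

lemma chebDeriv_one_ratio (hk : 1 ≤ k) (hkN : k ≤ N) :
    (N + 1) * (N + k) * chebDeriv N k 1 = N * (N + 1 - k) * chebDeriv (N + 1 : ℕ) k 1 := by
  simpa using mul_chebDeriv_of_one_sub_sq_mul_eq_zero (x := 1) hk hkN (by ring)

/-- The bound of `mval_upper_bound_interior` for `n = N + 1`. -/
noncomputable def interiorBound (N k : ℕ) (σ : ℝ) : ℝ :=
  3 / (2 * k + 1) * chebDeriv N k 1
    + 2 / (2 * k + 1) * (2 * (k + 1) / (N + 1 + k)) * chebDeriv (N + 1 : ℕ) k 1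
      * (σ / sigmaN (N + 1))

lemma IsBoundedChain.abs_le_of_isGreatest_zeros (hk : 1 ≤ k) (hkN : k + 1 ≤ N) (hw0 : 0 ≤ w)
    (hw : IsGreatest {x | chebDeriv (N + 1 : ℕ) (k + 1) x = 0} w) (hσ : 0 ≤ σ)
    (hF : IsBoundedChain (N + 1) σ F (-1) 1) :
    |F k w| ≤ 1 / (2 * k + 1) * ((N + k) / N * chebDeriv N k 1
      + k / (N + 1) * chebDeriv (N + 1 : ℕ) k 1 * (σ / sigmaN (N + 1))) := by
  have hk' : (1 : ℝ) ≤ k := by exact_mod_cast hk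
  have hkN' : (k : ℝ) + 1 ≤ N := by exact_mod_cast hkN
  have hw1 : w < 1 := lt_one_of_isGreatest_zeros (by omega) hw
  have hMn : 0 < chebDeriv (N + 1 : ℕ) k 1 := chebDeriv_one_pos (by omega)
  have hτ : 0 ≤ σ / sigmaN (N + 1) := div_nonneg hσ (sigmaN_pos _).le
  have hN : (0 : ℝ) < N := by linarith
  have hratio := chebDeriv_one_ratio hk (show k ≤ N by omega)
  obtain ⟨r, hr0, hr, hrle⟩ := exists_chebDeriv_eq_neg_mul (by omega) hw0 hw
  have hr1 : r ≤ 1 / (2 * k + 1) := by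
    rw [le_div_iff₀ (by positivity)]
    refine le_of_mul_le_mul_right ?_ (show 0 < 2 + (2 * k + 5) * w by positivity)
    nlinarith
  have hbound := hF.abs_le_of_chebDeriv_eq_zero hk (by omega) ⟨by linarith, hw1⟩ hw.1
  rw [hr, neg_mul, abs_neg, abs_of_nonneg (mul_nonneg hr0 hMn.le), Nat.cast_add_one] at hbound
  calc |F k w|
      ≤ ((N + 1 - k) / (N + 1) + k / (N + 1) * (σ / sigmaN (N + 1)))
          * (r * chebDeriv (N + 1 : ℕ) k 1) := hbound
    _ ≤ ((N + 1 - k) / (N + 1) + k / (N + 1) * (σ / sigmaN (N + 1)))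
          * (1 / (2 * k + 1) * chebDeriv (N + 1 : ℕ) k 1) := by
        have : (0 : ℝ) ≤ N + 1 - k := by linarith
        gcongr
    _ = _ := by
        field_simp
        linear_combination -hratio

lemma interiorBound_nonneg (hkN : k ≤ N) (hσ : 0 ≤ σ) : 0 ≤ interiorBound N k σ := by
  have hM : 0 < chebDeriv N k 1 := chebDeriv_one_pos hkN
  have hMn : 0 < chebDeriv (N + 1 : ℕ) k 1 := chebDeriv_one_pos (by omega)
  have hτ : 0 ≤ σ / sigmaN (N + 1) := div_nonneg hσ (sigmaN_pos _).le
  unfold interiorBound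
  positivity

lemma IsBoundedChain.abs_le_interiorBound_of_eq_zero (hk : 2 ≤ k) (hkN : k + 2 ≤ N) (hx0 : 0 ≤ x)
    (hxw : x ≤ w) (hw : IsGreatest {x | chebDeriv (N + 1 : ℕ) (k + 1) x = 0} w) (hσ : 0 ≤ σ)
    (hF : IsBoundedChain (N + 1) σ F (-1) 1) (hz : F (k + 1) x = 0) :
    |F k x| ≤ interiorBound N k σ := by
  have hkN' : (k : ℝ) + 2 ≤ N := by exact_mod_cast hkN
  have hN : (0 : ℝ) < N := by linarith [k.cast_nonneg (α := ℝ)]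
  have hM : 0 < chebDeriv N k 1 := chebDeriv_one_pos (by omega)
  have hMn : 0 < chebDeriv (N + 1 : ℕ) k 1 := chebDeriv_one_pos (by omega)
  have hτ : 0 ≤ σ / sigmaN (N + 1) := div_nonneg hσ (sigmaN_pos _).le
  have hratio : chebDeriv N k 1
      = N * (N - k + 1) * chebDeriv (N + 1 : ℕ) k 1 / ((N + 1) * (N + k)) := by
    rw [eq_div_iff (by positivity)]
    linear_combination chebDeriv_one_ratio (N := N) (k := k) (by omega) (by omega)
  have hpos : (0 : ℝ) < N - k + 1 := by linarith
  calc |F k x|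
      ≤ 2 / (2 * k + 1) * chebDeriv N k 1
        * (30 / 31 + 2 / N * (σ / sigmaN (N + 1)) * ((k + 1) * N / (N - k + 1))) :=
        hF.abs_le_of_eq_zero hk hkN hx0 hxw hw hσ hz
    _ = 60 / 31 / (2 * k + 1) * chebDeriv N k 1
        + 2 / (2 * k + 1) * (2 * (k + 1) * N / ((N + 1) * (N + k))) * chebDeriv (N + 1 : ℕ) k 1
          * (σ / sigmaN (N + 1)) := by
        rw [hratio]
        field_simp
        ring
    _ ≤ interiorBound N k σ := by
        unfold interiorBound
        gcongr ?_ / _ * _ + _ * ?_ * _ * _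
        · norm_num
        · rw [div_le_div_iff₀ (by positivity) (by positivity)]
          nlinarith

lemma IsBoundedChain.mul_abs_le_interiorBound (hk : 1 ≤ k) (hkN : k + 1 ≤ N) (hw0 : 0 ≤ w)
    (hw : IsGreatest {x | chebDeriv (N + 1 : ℕ) (k + 1) x = 0} w) (hσ : 0 ≤ σ)
    (hF : IsBoundedChain (N + 1) σ F (-1) 1) {c : ℝ} (hc0 : 0 ≤ c) (hc2 : c ≤ 2)
    (hc : c * (N + k) ≤ 3 * N) : c * |F k w| ≤ interiorBound N k σ := by
  have hkN' : (k : ℝ) + 1 ≤ N := by exact_mod_cast hkN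
  have hN : (0 : ℝ) < N := by linarith [k.cast_nonneg (α := ℝ)]
  have hM : 0 < chebDeriv N k 1 := chebDeriv_one_pos (by omega)
  have hMn : 0 < chebDeriv (N + 1 : ℕ) k 1 := chebDeriv_one_pos (by omega)
  have hτ : 0 ≤ σ / sigmaN (N + 1) := div_nonneg hσ (sigmaN_pos _).le
  calc c * |F k w|
      ≤ c * (1 / (2 * k + 1) * ((N + k) / N * chebDeriv N k 1
        + k / (N + 1) * chebDeriv (N + 1 : ℕ) k 1 * (σ / sigmaN (N + 1)))) := by
        gcongr
        exact hF.abs_le_of_isGreatest_zeros hk hkN hw0 hw hσ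
    _ = c * (N + k) / N / (2 * k + 1) * chebDeriv N k 1
        + c / (2 * k + 1) * (k / (N + 1)) * chebDeriv (N + 1 : ℕ) k 1
          * (σ / sigmaN (N + 1)) := by ring
    _ ≤ interiorBound N k σ := by
        unfold interiorBound
        gcongr ?_ / _ * _ + ?_ / _ * ?_ * _ * _
        · rwa [div_le_iff₀ hN]
        · rw [div_le_div_iff₀ (by positivity) (by positivity)]
          nlinarith

lemma IsBoundedChain.abs_le_interiorBound_right (hk : 1 ≤ k) (hkN : k + 1 ≤ N) (hw0 : 0 ≤ w)
    (hw : IsGreatest {x | chebDeriv (N + 1 : ℕ) (k + 1) x = 0} w) (hσ : 0 ≤ σ)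
    (hF : IsBoundedChain (N + 1) σ F (-1) 1) : |F k w| ≤ interiorBound N k σ := by
  have hkN' : (k : ℝ) + 1 ≤ N := by exact_mod_cast hkN
  have h := hF.mul_abs_le_interiorBound hk hkN hw0 hw hσ zero_le_one one_le_two (by linarith)
  rwa [one_mul] at h

-- The affine map fixing `-1` and sending `w` to `x` contracts by at most a factor `2`.
lemma IsBoundedChain.abs_one_le_interiorBound (hN : 2 ≤ N) (hx0 : 0 ≤ x) (hxw : x ≤ w)
    (hw : IsGreatest {x | chebDeriv (N + 1 : ℕ) 2 x = 0} w) (hσ : 0 ≤ σ)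
    (hF : IsBoundedChain (N + 1) σ F (-1) 1) : |F 1 x| ≤ interiorBound N 1 σ := by
  have hN' : (2 : ℝ) ≤ N := by exact_mod_cast hN
  have hw0 : 0 ≤ w := hx0.trans hxw
  have hw1 : w < 1 := lt_one_of_isGreatest_zeros (by omega) hw
  obtain ⟨s, hs⟩ : ∃ s, s = (1 + x) / (1 + w) := ⟨_, rfl⟩
  have hsw : s * (1 + w) = 1 + x := by rw [hs]; field_simp
  have hs0 : 1 / 2 ≤ s := by
    rw [hs, div_le_div_iff₀ two_pos (by positivity)]
    linarith
  have hs1 : s ≤ 1 := hs ▸ div_le_one_of_le₀ (by linarith) (by positivity)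
  have hmaps : MapsTo (fun t => s * t + (s - 1)) (Icc (-1) 1) (Icc (-1) 1) := fun t ht =>
    ⟨by nlinarith [ht.1], by nlinarith [ht.2]⟩
  have h := (hF.comp_affine (by linarith) (abs_le.2 ⟨by linarith, hs1⟩) hmaps)
    |>.mul_abs_le_interiorBound le_rfl hN hw0 hw hσ zero_le_two le_rfl
      (by push_cast; linarith)
  rw [pow_one, show s * w + (s - 1) = x by linarith, abs_mul, abs_of_pos (by linarith)] at h
  refine le_trans ?_ h
  nlinarith [abs_nonneg (F 1 x)]

lemma IsBoundedChain.abs_le_interiorBound (hk : 1 ≤ k) (hkN : k + 1 ≤ N) (hx0 : 0 ≤ x)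
    (hxw : x ≤ w) (hw : IsGreatest {x | chebDeriv (N + 1 : ℕ) (k + 1) x = 0} w) (hσ : 0 ≤ σ)
    (hF : IsBoundedChain (N + 1) σ F (-1) 1) : |F k x| ≤ interiorBound N k σ := by
  rcases hk.eq_or_lt' with rfl | hk2
  · exact hF.abs_one_le_interiorBound hkN hx0 hxw hw hσ
  have hw0 : 0 ≤ w := hx0.trans hxw
  rcases hkN.eq_or_lt' with rfl | hkN2
  · obtain rfl : x = w := by linarith [eq_zero_of_isGreatest_zeros hw0 hw]
    exact hF.abs_le_interiorBound_right hk le_rfl hw0 hw hσ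
  have hw1 : w < 1 := lt_one_of_isGreatest_zeros (by omega) hw
  obtain ⟨hcont, hderiv⟩ := hF.isDerivChain k (by omega)
  obtain ⟨y, hy, hxy, hzero⟩ := exists_abs_le_and_deriv_eq_zero (a := -w) (b := w) (x := x)
    (hcont.mono (Icc_subset_Icc (by linarith) hw1.le))
    (fun t ht => hderiv t ⟨by linarith [ht.1], by linarith [ht.2]⟩) ⟨by linarith, hxw⟩
  refine hxy.trans ?_
  clear hxy hcont hderiv
  wlog hy0 : 0 ≤ y generalizing F y
  · have h := this hF.comp_neg (y := -y) ⟨by linarith [hy.2], by linarith [hy.1]⟩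
      (fun hy' => by rw [neg_neg, hzero ⟨by linarith [hy'.2], by linarith [hy'.1]⟩, mul_zero])
      (by linarith)
    simpa [abs_mul] using h
  rcases hy.2.eq_or_lt with rfl | hyw
  · exact hF.abs_le_interiorBound_right hk hkN hw0 hw hσ
  · exact hF.abs_le_interiorBound_of_eq_zero hk2 hkN2 hy0 hyw.le hw hσ
      (hzero ⟨by linarith, hyw⟩)

end Bound
/-- upper bound for `m_k(x,σ)` on `[0, ω_k]` via Lagrange interpolation. -/
theorem mval_upper_bound_interior (n k : ℕ) (σ : ℝ) (hn : 2 ≤ n) (hk1 : 1 ≤ k)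
    (hk2 : k ≤ n - 1) (hσ : 0 ≤ σ)
    (ωk : ℝ) (hω : IsGreatest {x : ℝ | chebDeriv n (k+1) x = 0} ωk) :
    ∀ x ∈ Icc (0:ℝ) ωk,
      mval n k x σ ≤
        (3 / (2 * (k:ℝ) + 1)) * chebDeriv ((n:ℤ) - 1) k 1 +
        (2 / (2 * (k:ℝ) + 1)) * (2 * ((k:ℝ) + 1) / ((n:ℝ) + (k:ℝ))) * chebDeriv n k 1 *
          (σ / sigmaN n) := by
  intro x hx
  obtain ⟨N, rfl⟩ := Nat.exists_eq_add_of_le' (one_le_two.trans hn)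
  have hkN : k ≠ N := by
    rintro rfl
    exact (chebDeriv_self_pos (k + 1) ωk).ne' hω.1
  have hbound : mval (N + 1) k x σ ≤ interiorBound N k σ := by
    refine Real.sSup_le ?_ (interiorBound_nonneg (by omega) hσ)
    rintro _ ⟨f, hf, rfl⟩
    exact hf.isBoundedChain.abs_le_interiorBound hk1 (by omega) hx.1 hx.2 hω hσ
  simpa only [interiorBound, Nat.cast_add_one, add_sub_cancel_right] using hbound
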